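/- arXiv:1407.6316 — 2 statements merged into one kernel-verified Lean document; each statement's English description precedes it below -/
import Mathlib

section
/- Let 1 ≤ r ≤ n−1 and m ≥ 1, and let ρ = (0,…,0,m+1,…,m+1) be the antidominant composition with r parts equal to m+1. Then for every k ∈ ℤ_{≥0}^n, as Laurent polynomials in q: c^ρ_{(n−r+1,…,n)}(k_1,…,k_{n−r}, k_{n−r+1}+1,…,k_n+1) = q^{rm−(k_{n−r+1}+⋯+k_n)} · c^ρ_{(1,…,r)}(k_1+1,…,k_r+1, k_{r+1},…,k_n). -/
open Finset

namespace CO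

/-- The column diagram `dg'(λ)` of a composition, as a finset of boxes `(i, j)`,
`1 ≤ i ≤ n`, `1 ≤ j ≤ λ_i`. -/
def dgF (n : ℕ) (lam : ℕ → ℕ) : Finset (ℕ × ℕ) :=
  (Finset.Icc 1 n).biUnion fun i => (Finset.Icc 1 (lam i)).image fun j => (i, j)

/-- The augmented diagram `d̂g(λ)`: one extra box `(i, 0)` below each column. -/
def augF (n : ℕ) (lam : ℕ → ℕ) : Finset (ℕ × ℕ) :=
  dgF n lam ∪ (Finset.Icc 1 n).image fun i => (i, 0)

/-- The box `d(u)` directly below a box. -/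
def dbox (u : ℕ × ℕ) : ℕ × ℕ := (u.1, u.2 - 1)

/-- The augmented filling `σ̂`: equal to `σ` on positive rows and to `i` on `(i, 0)`. -/
def aug (σ : ℕ × ℕ → ℕ) (u : ℕ × ℕ) : ℕ := if u.2 = 0 then u.1 else σ u

/-- A filling takes values in `{1, …, n}` on the diagram. -/
def IsFilling (n : ℕ) (lam : ℕ → ℕ) (σ : ℕ × ℕ → ℕ) : Prop :=
  ∀ u ∈ dgF n lam, 1 ≤ σ u ∧ σ u ≤ n

/-- Attacking boxes: same row, or consecutive rows with the lower box to the right. -/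
def Attack (u v : ℕ × ℕ) : Prop :=
  u ≠ v ∧ (u.2 = v.2 ∨ (u.2 = v.2 + 1 ∧ u.1 < v.1) ∨ (v.2 = u.2 + 1 ∧ v.1 < u.1))

/-- A non-attacking filling: `σ̂` takes distinct values on attacking pairs of the
augmented diagram. -/
def NonAttacking (n : ℕ) (lam : ℕ → ℕ) (σ : ℕ × ℕ → ℕ) : Prop :=
  ∀ u ∈ augF n lam, ∀ v ∈ augF n lam, Attack u v → aug σ u ≠ aug σ v

/-- The arm of a box `u`. -/
def armF (n : ℕ) (lam : ℕ → ℕ) (u : ℕ × ℕ) : Finset (ℕ × ℕ) :=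
  ((dgF n lam).filter fun v => v.1 < u.1 ∧ v.2 = u.2 ∧ lam v.1 ≤ lam u.1) ∪
    ((augF n lam).filter fun v => u.1 < v.1 ∧ v.2 + 1 = u.2 ∧ lam v.1 < lam u.1)

/-- `a(u) = |arm(u)|`. -/
def armCard (n : ℕ) (lam : ℕ → ℕ) (u : ℕ × ℕ) : ℕ := (armF n lam u).card

/-- The number of inversions of `σ̂`: attacking pairs `u, u'` with `σ̂(u) < σ̂(u')`
and (same row with `u` to the left, or `u'` one row above `u` strictly to the left). -/
def invCard (n : ℕ) (lam : ℕ → ℕ) (σ : ℕ × ℕ → ℕ) : ℕ :=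
  ((augF n lam ×ˢ augF n lam).filter fun p =>
    aug σ p.1 < aug σ p.2 ∧
      ((p.1.2 = p.2.2 ∧ p.1.1 < p.2.1) ∨ (p.2.2 = p.1.2 + 1 ∧ p.2.1 < p.1.1))).card

/-- The descent set of `σ̂`. -/
def desF (n : ℕ) (lam : ℕ → ℕ) (σ : ℕ × ℕ → ℕ) : Finset (ℕ × ℕ) :=
  (dgF n lam).filter fun u => aug σ (dbox u) < aug σ u

/-- The statistic `coinv(σ̂)` (as an integer). -/
def coinv (n : ℕ) (lam : ℕ → ℕ) (σ : ℕ × ℕ → ℕ) : ℤ :=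
  (∑ u ∈ dgF n lam, (armCard n lam u : ℤ)) - invCard n lam σ +
    (((Finset.Icc 1 n ×ˢ Finset.Icc 1 n).filter fun p =>
      p.1 < p.2 ∧ lam p.1 ≤ lam p.2).card : ℤ) +
    ∑ u ∈ desF n lam σ, (armCard n lam u : ℤ)

/-- The statistic `T(σ)`. -/
def Tstat (n : ℕ) (lam : ℕ → ℕ) (σ : ℕ × ℕ → ℕ) : ℤ :=
  coinv n lam σ -
    ∑ u ∈ (dgF n lam).filter fun u => aug σ u ≠ aug σ (dbox u), (armCard n lam u : ℤ)

/-- Antidominant composition: `λ_1 ≤ ⋯ ≤ λ_n`. -/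
def Antidominant (n : ℕ) (lam : ℕ → ℕ) : Prop :=
  ∀ i j, 1 ≤ i → i ≤ j → j ≤ n → lam i ≤ lam j

/-- Appropriate filling: non-attacking with `T(σ) = 0`. -/
def Appropriate (n : ℕ) (lam : ℕ → ℕ) (σ : ℕ × ℕ → ℕ) : Prop :=
  IsFilling n lam σ ∧ NonAttacking n lam σ ∧ Tstat n lam σ = 0

/-- The operation `π` on compositions: `π(λ) = (λ_n + 1, λ_1, …, λ_{n-1})`. -/
def piComp (n : ℕ) (lam : ℕ → ℕ) : ℕ → ℕ :=
  fun i => if i = 1 then lam n + 1 else lam (i - 1)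

/-- The operation `π` on boxes. -/
def piBox (n : ℕ) (u : ℕ × ℕ) : ℕ × ℕ :=
  if u.1 < n then (u.1 + 1, u.2) else (1, u.2 + 1)

/-- Extension by zero of a function defined on the diagram. -/
def ext (n : ℕ) (lam : ℕ → ℕ) (f : {u // u ∈ dgF n lam} → ℕ) : ℕ × ℕ → ℕ :=
  fun u => if h : u ∈ dgF n lam then f ⟨u, h⟩ else 0

/-- `qstat(σ) = Σ (l(u) + 1)` over boxes `u` with `σ̂(u) < σ̂(d(u))`. -/
def qstat (n : ℕ) (lam : ℕ → ℕ) (σ : ℕ × ℕ → ℕ) : ℕ :=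
  ∑ u ∈ (dgF n lam).filter fun u => aug σ u < aug σ (dbox u), (lam u.1 - u.2 + 1)

end CO

namespace CO

/-- The statistic `asc(τ) = Σ (l(u) + 1)` over boxes `u = (i, j)` with `j ≥ 2` and
`τ(u) < τ(d(u))`. -/
def ascStat (n : ℕ) (mu : ℕ → ℕ) (τ : ℕ × ℕ → ℕ) : ℕ :=
  ∑ u ∈ (dgF n mu).filter fun u => 2 ≤ u.2 ∧ τ u < τ (dbox u), (mu u.1 - u.2 + 1)

/-- The greedy rule (iii): for boxes in rows `≥ 2`, with `S = τ(arm(u)) ∪ {τ(u)}`,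
`τ(u)` is the minimum of `{x ∈ S : x ≥ τ(d(u))}` if nonempty, and `min S` otherwise. -/
def GreedyRule (n : ℕ) (mu : ℕ → ℕ) (τ : ℕ × ℕ → ℕ) : Prop :=
  ∀ u ∈ dgF n mu, 2 ≤ u.2 →
    (({x ∈ τ '' ↑(armF n mu u) ∪ {τ u} | τ (dbox u) ≤ x}.Nonempty →
        τ u = sInf {x ∈ τ '' ↑(armF n mu u) ∪ {τ u} | τ (dbox u) ≤ x}) ∧
      (¬ {x ∈ τ '' ↑(armF n mu u) ∪ {τ u} | τ (dbox u) ≤ x}.Nonempty →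
        τ u = sInf (τ '' ↑(armF n mu u) ∪ {τ u})))

/-- Conditions (i)–(iv) on the fillings `τ` counted by `c_a^μ(k)`. -/
def CCond (n : ℕ) (mu : ℕ → ℕ) (a : ℕ → ℕ) (k : ℕ → ℕ) (τ : ℕ × ℕ → ℕ) : Prop :=
  (∀ u ∈ dgF n mu, 1 ≤ τ u ∧ τ u ≤ n) ∧
    (∀ j, (j, 1) ∈ dgF n mu → τ (j, 1) = a j) ∧
    (∀ u ∈ dgF n mu, ∀ v ∈ dgF n mu, Attack u v → τ u ≠ τ v) ∧
    GreedyRule n mu τ ∧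
    ∀ i, 1 ≤ i → i ≤ n → ((dgF n mu).filter fun u => τ u = i).card = k i

open Classical in
/-- The coefficient `c_a^μ(k) ∈ ℤ[q]`: the generating function `Σ_τ q^{asc(τ)}`
over fillings satisfying (i)–(iv). -/
noncomputable def cCoef (n : ℕ) (mu : ℕ → ℕ) (a : ℕ → ℕ) (k : ℕ → ℕ) : Polynomial ℤ :=
  ∑ f ∈ (Fintype.piFinset fun _ : {u // u ∈ dgF n mu} => Finset.Icc 1 n).filter
      fun f => CCond n mu a k (ext n mu f),
    Polynomial.X ^ ascStat n mu (ext n mu f)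

end CO

/-!
Read a filling row by row, from the bottom. The greedy rule determines each row from the row below
it and the *set* of letters used, and the number of descents between two rows depends only on their
sets of letters `A` and `B`: it is `wraps A B`. Hence `c_a` is a coefficient of a generating
function `towerGF` of towers of sets standing on the set of letters of `a`.

If that set is an initial segment of the letters, then `towerGF` is a symmetric polynomial: it is
unchanged by exchanging two adjacent variables `x_a`, `x_b`. The induction on the height also needs
the invariance of `x_b (towerGF A' - towerGF A)`, where `A'` is `A` with `a` and `b` exchanged.

The cyclic shift of the letters carrying the top `r` letters to the bottom changes `wraps A B` by
the difference of the numbers of top letters in `B` and `A`. Weighted by heights, these differences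
telescope to the number of top letters used, so the shift amounts to multiplying the top `r`
variables by `q`, up to the factor `q ^ (m * r)`. By symmetry the permutation of the variables
disappears, and comparing coefficients gives the identity.
-/

namespace CO

section Swap

variable {σ : Type*} [DecidableEq σ]

lemma map_swap_map_swap (A : Finset σ) (a b : σ) :
    (A.map (Equiv.swap a b).toEmbedding).map (Equiv.swap a b).toEmbedding = A := by
  ext x; simp [mem_map_equiv]

lemma card_filter_map_swap (A : Finset σ) (a b : σ) {P : σ → Prop} [DecidablePred P]
    (h : P a ↔ P b) : #{x ∈ A.map (Equiv.swap a b).toEmbedding | P x} = #{x ∈ A | P x} := by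
  have hswap (x : σ) : P (Equiv.swap a b x) ↔ P x := by
    rw [Equiv.swap_apply_def]; split_ifs <;> simp_all
  rw [filter_map, card_map]
  exact congrArg card (filter_congr fun x _ => hswap x)

end Swap

section Wraps

variable {α : Type*} [LinearOrder α]

/-- The number of letters of `A` that wrap around when the letters of `A` are matched greedily,
in increasing cyclic order, with those of `B`: the largest excess of `A` over `B` in an upper set.
The truncated subtraction makes it zero when there is no excess. -/
def wraps (A B : Finset α) : ℕ := A.sup fun x => #{a ∈ A | x ≤ a} - #{b ∈ B | x ≤ b}

lemma card_filter_le_add_wraps (A B : Finset α) {P : α → Prop} [DecidablePred P]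
    (hP : Monotone P) : #{a ∈ A | P a} ≤ #{b ∈ B | P b} + wraps A B := by
  rcases Finset.eq_empty_or_nonempty {a ∈ A | P a} with h | h
  · simp only [h, card_empty, zero_le]
  obtain ⟨hA, hPx⟩ := mem_filter.1 (min'_mem _ h)
  set x := min' _ h
  have hsub : #{a ∈ A | P a} ≤ #{a ∈ A | x ≤ a} := card_le_card fun a ha =>
    mem_filter.2 ⟨(mem_filter.1 ha).1, min'_le _ _ ha⟩
  have hsup : #{b ∈ B | x ≤ b} ≤ #{b ∈ B | P b} :=
    card_le_card (monotone_filter_right B fun b _ hb => hP hb hPx)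
  have hwraps : #{a ∈ A | x ≤ a} - #{b ∈ B | x ≤ b} ≤ wraps A B :=
    le_sup (f := fun x => #{a ∈ A | x ≤ a} - #{b ∈ B | x ≤ b}) hA
  omega

lemma wraps_le_iff {A B : Finset α} {c : ℕ} :
    wraps A B ≤ c ↔ ∀ x, #{a ∈ A | x ≤ a} ≤ #{b ∈ B | x ≤ b} + c := by
  refine ⟨fun h x => ?_, fun h => Finset.sup_le fun x _ => Nat.sub_le_iff_le_add'.2 (h x)⟩
  have := card_filter_le_add_wraps A B (P := (x ≤ ·)) fun _ _ h h' => h'.trans h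
  omega

lemma card_filter_ge_eq_add_gt (A : Finset α) (b : α) :
    #{x ∈ A | b ≤ x} = #{x ∈ A | b < x} + if b ∈ A then 1 else 0 := by
  have hunion : {x ∈ A | b ≤ x} = {x ∈ A | b < x} ∪ {x ∈ A | x = b} := by
    ext x; simp only [le_iff_lt_or_eq, mem_filter, mem_union]; grind
  rw [hunion, card_union_of_disjoint (disjoint_filter.2 fun x _ h h' => h.ne' h'),
    filter_eq' A b, apply_ite card, card_singleton, card_empty]

lemma card_filter_ge_eq_of_covBy (A : Finset α) {a b : α} (hab : a ⋖ b) :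
    #{x ∈ A | a ≤ x} = #{x ∈ A | b ≤ x} + if a ∈ A then 1 else 0 := by
  simp only [card_filter_ge_eq_add_gt A a, hab.lt_iff_le_right]

lemma card_filter_ge_map_swap (A : Finset α) {a b : α} (hab : a ⋖ b) :
    #{x ∈ A.map (Equiv.swap a b).toEmbedding | b ≤ x} =
      #{x ∈ A | b < x} + if a ∈ A then 1 else 0 := by
  simp [card_filter_ge_eq_add_gt, card_filter_map_swap A a b (P := (b < ·)) (by simp [hab.le])]

lemma card_filter_ge_map_swap_of_ne (A : Finset α) {a b x : α} (hab : a ⋖ b) (hx : x ≠ b) :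
    #{y ∈ A.map (Equiv.swap a b).toEmbedding | x ≤ y} = #{y ∈ A | x ≤ y} :=
  card_filter_map_swap A a b
    ⟨fun h => h.trans hab.le, fun h => hab.lt_iff_le_left.1 (h.lt_of_ne hx)⟩

lemma wraps_map_swap_right {a b : α} (hab : a ⋖ b) {A : Finset α} (hA : b ∈ A → a ∈ A)
    (B : Finset α) : wraps A (B.map (Equiv.swap a b).toEmbedding) = wraps A B := by
  have hle (B : Finset α) : wraps A (B.map (Equiv.swap a b).toEmbedding) ≤ wraps A B := by
    refine wraps_le_iff.2 fun x => ?_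
    by_cases hx : x = b
    · subst hx
      have hgt := card_filter_le_add_wraps A B (P := (x < ·)) fun _ _ h h' => h'.trans_le h
      have hge := wraps_le_iff.1 (le_refl (wraps A B)) a
      rw [card_filter_ge_map_swap B hab]
      rw [card_filter_ge_eq_of_covBy A hab, card_filter_ge_eq_of_covBy B hab,
        card_filter_ge_eq_add_gt B x] at hge
      rw [card_filter_ge_eq_add_gt A x] at hge ⊢
      grind
    · rw [card_filter_ge_map_swap_of_ne B hab hx]
      exact wraps_le_iff.1 le_rfl x
  refine (hle B).antisymm ?_
  simpa only [map_swap_map_swap] using hle (B.map (Equiv.swap a b).toEmbedding)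

lemma wraps_map_swap_left {a b : α} (hab : a ⋖ b) (A : Finset α) {B : Finset α}
    (hB : a ∈ B → b ∈ B) : wraps (A.map (Equiv.swap a b).toEmbedding) B = wraps A B := by
  have hle (A : Finset α) : wraps (A.map (Equiv.swap a b).toEmbedding) B ≤ wraps A B := by
    refine wraps_le_iff.2 fun x => ?_
    by_cases hx : x = b
    · subst hx
      have hgt := card_filter_le_add_wraps A B (P := (x < ·)) fun _ _ h h' => h'.trans_le h
      have hge := wraps_le_iff.1 (le_refl (wraps A B)) a
      rw [card_filter_ge_map_swap A hab]
      rw [card_filter_ge_eq_of_covBy A hab, card_filter_ge_eq_of_covBy B hab,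
        card_filter_ge_eq_add_gt A x] at hge
      rw [card_filter_ge_eq_add_gt B x] at hge ⊢
      grind
    · rw [card_filter_ge_map_swap_of_ne A hab hx]
      exact wraps_le_iff.1 le_rfl x
  refine (hle A).antisymm ?_
  simpa only [map_swap_map_swap] using hle (A.map (Equiv.swap a b).toEmbedding)

end Wraps

open MvPolynomial

section SwapInvariants

variable {σ R : Type*} [DecidableEq σ] [CommRing R] {a b : σ}

variable (R a b) in
/-- The subalgebra of polynomials unchanged by exchanging the variables `a` and `b`. -/
noncomputable def swapInvariants : Subalgebra R (MvPolynomial σ R) :=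
  AlgHom.equalizer (rename (Equiv.swap a b)) (AlgHom.id R _)

lemma mem_swapInvariants {p : MvPolynomial σ R} :
    p ∈ swapInvariants R a b ↔ rename (Equiv.swap a b) p = p :=
  Iff.rfl

lemma map_swap_eq_self {B : Finset σ} (h : a ∈ B ↔ b ∈ B) :
    B.map (Equiv.swap a b).toEmbedding = B := by
  ext x
  rw [mem_map_equiv, Equiv.symm_swap, Equiv.swap_apply_def]
  split_ifs <;> simp_all

lemma mem_iff_mem_of_map_swap_eq_self {B : Finset σ}
    (h : B.map (Equiv.swap a b).toEmbedding = B) : a ∈ B ↔ b ∈ B := by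
  conv_lhs => rw [← h, mem_map_equiv, Equiv.symm_swap, Equiv.swap_apply_left]

lemma map_swap_eq_insert_erase {B : Finset σ} (ha : a ∈ B) (hb : b ∉ B) :
    B.map (Equiv.swap a b).toEmbedding = insert b (B.erase a) := by
  ext x
  rw [mem_map_equiv, Equiv.symm_swap, Equiv.swap_apply_def]
  grind

lemma prod_X_mem_swapInvariants {B : Finset σ} (h : a ∈ B ↔ b ∈ B) :
    ∏ x ∈ B, (X x : MvPolynomial σ R) ∈ swapInvariants R a b := by
  rw [mem_swapInvariants, map_prod]
  conv_rhs => rw [← map_swap_eq_self h, prod_map]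
  simp only [rename_X, Equiv.coe_toEmbedding]

lemma X_add_X_mem_swapInvariants : (X a + X b : MvPolynomial σ R) ∈ swapInvariants R a b := by
  simp [mem_swapInvariants, add_comm]

lemma sum_smul_mem_swapInvariants {s : Finset (Finset σ)} {c : Finset σ → R}
    {p : Finset σ → MvPolynomial σ R}
    (hs : ∀ B ∈ s, B.map (Equiv.swap a b).toEmbedding ∈ s)
    (hc : ∀ B, c (B.map (Equiv.swap a b).toEmbedding) = c B)
    (hfix : ∀ B, (a ∈ B ↔ b ∈ B) → p B ∈ swapInvariants R a b)
    (hpair : ∀ B, a ∈ B → b ∉ B →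
      p B + p (B.map (Equiv.swap a b).toEmbedding) ∈ swapInvariants R a b) :
    ∑ B ∈ s, c B • p B ∈ swapInvariants R a b := by
  have hadd (B : Finset σ) :
      p B + p (B.map (Equiv.swap a b).toEmbedding) ∈ swapInvariants R a b := by
    by_cases h : a ∈ B ↔ b ∈ B
    · rw [map_swap_eq_self h]
      exact add_mem (hfix B h) (hfix B h)
    obtain ⟨ha, hb⟩ | ⟨ha, hb⟩ : a ∈ B ∧ b ∉ B ∨ a ∉ B ∧ b ∈ B := by tauto
    · exact hpair B ha hb
    · have := hpair (B.map (Equiv.swap a b).toEmbedding) (by simpa [mem_map_equiv])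
        (by simpa [mem_map_equiv])
      rwa [map_swap_map_swap, add_comm] at this
  simp only [mem_swapInvariants, map_add] at hadd hfix ⊢
  rw [← sub_eq_zero, map_sum, ← sum_sub_distrib]
  refine sum_involution (fun B _ => B.map (Equiv.swap a b).toEmbedding) (fun B _ => ?_)
    (fun B _ hne heq => hne ?_) hs fun B _ => map_swap_map_swap B a b
  · rw [hc, map_smul, map_smul, ← smul_sub, ← smul_sub, ← smul_add, sub_add_sub_comm, hadd B,
      sub_self, smul_zero]
  · rw [map_smul, hfix B (mem_iff_mem_of_map_swap_eq_self heq), sub_self]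

end SwapInvariants

lemma isSymmetric_of_mem_swapInvariants {R : Type*} [CommRing R] {n : ℕ}
    {p : MvPolynomial (Fin n) R} (h : ∀ i j : Fin n, i ⋖ j → p ∈ swapInvariants R i j) :
    p.IsSymmetric := by
  intro e
  obtain _ | n := n
  · rw [Subsingleton.elim e 1, Equiv.Perm.coe_one, rename_id_apply]
  have he : e ∈ Submonoid.closure (Set.range fun i : Fin n ↦ Equiv.swap i.castSucc i.succ) :=
    Equiv.Perm.mclosure_swap_castSucc_succ n ▸ Submonoid.mem_top e
  induction he using Submonoid.closure_induction with
  | mem e he =>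
    obtain ⟨i, rfl⟩ := he
    exact h _ _ ⟨i.castSucc_lt_succ, fun _ hj => (Fin.castSucc_lt_iff_succ_le.1 hj).not_gt⟩
  | one => rw [Equiv.Perm.coe_one, rename_id_apply]
  | mul e f _ _ he hf => rw [Equiv.Perm.coe_mul, ← rename_rename, hf, he]

section TowerGF

variable {α R : Type*} [LinearOrder α] [Fintype α] [CommRing R]

/-- The generating function of the towers of `m` sets of letters standing on `A`, all of the
size of `A`: a step from `B` to `C` with `l` sets from `C` upwards has weight `q ^ (l * wraps B C)`,
and each letter used contributes its variable. -/
noncomputable def towerGF (q : R) : ℕ → Finset α → MvPolynomial α R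
  | 0, _ => 1
  | m + 1, A => ∑ B ∈ powersetCard #A univ,
      q ^ ((m + 1) * wraps A B) • ((∏ b ∈ B, X b) * towerGF q m B)

variable {q : R} {m : ℕ} {a b : α}

lemma weighted_towerGF_add_mem_swapInvariants
    (hsymm : ∀ A : Finset α, (b ∈ A → a ∈ A) → towerGF q m A ∈ swapInvariants R a b)
    (hdiff : ∀ A : Finset α,
      X b * (towerGF q m (A.map (Equiv.swap a b).toEmbedding) - towerGF q m A) ∈
        swapInvariants R a b)
    {B : Finset α} (ha : a ∈ B) (hb : b ∉ B) :
    (∏ x ∈ B, X x) * towerGF q m B +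
      (∏ x ∈ B.map (Equiv.swap a b).toEmbedding, X x) *
        towerGF q m (B.map (Equiv.swap a b).toEmbedding) ∈ swapInvariants R a b := by
  have hB : towerGF q m B ∈ swapInvariants R a b := hsymm B fun h => absurd h hb
  have hcommon : ∏ x ∈ B.erase a, (X x : MvPolynomial α R) ∈ swapInvariants R a b :=
    prod_X_mem_swapInvariants (by simp [hb])
  convert mul_mem hcommon (add_mem (mul_mem X_add_X_mem_swapInvariants hB) (hdiff B)) using 1
  rw [map_swap_eq_insert_erase ha hb, prod_insert (by simp [hb]), ← mul_prod_erase B _ ha]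
  ring

lemma towerGF_succ_mem_swapInvariants (hab : a ⋖ b)
    (hsymm : ∀ A : Finset α, (b ∈ A → a ∈ A) → towerGF q m A ∈ swapInvariants R a b)
    (hdiff : ∀ A : Finset α,
      X b * (towerGF q m (A.map (Equiv.swap a b).toEmbedding) - towerGF q m A) ∈
        swapInvariants R a b)
    {A : Finset α} (hA : b ∈ A → a ∈ A) : towerGF q (m + 1) A ∈ swapInvariants R a b := by
  refine sum_smul_mem_swapInvariants (p := fun B => (∏ x ∈ B, X x) * towerGF q m B)
    (fun B hB => ?_) (fun B => ?_)
    (fun B hB => mul_mem (prod_X_mem_swapInvariants hB) (hsymm B hB.2))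
    fun B => weighted_towerGF_add_mem_swapInvariants hsymm hdiff
  · rwa [mem_powersetCard_univ, card_map, ← mem_powersetCard_univ]
  · rw [wraps_map_swap_right hab hA]

lemma X_mul_towerGF_succ_sub_mem_swapInvariants (hab : a ⋖ b)
    (hsymm : ∀ A : Finset α, (b ∈ A → a ∈ A) → towerGF q m A ∈ swapInvariants R a b)
    (A : Finset α) :
    X b * (towerGF q (m + 1) (A.map (Equiv.swap a b).toEmbedding) - towerGF q (m + 1) A) ∈
      swapInvariants R a b := by
  rw [towerGF, towerGF, card_map, ← sum_sub_distrib, mul_sum]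
  refine sum_mem fun B _ => ?_
  by_cases hB : a ∈ B → b ∈ B
  · rw [wraps_map_swap_left hab A hB, sub_self, mul_zero]
    exact zero_mem _
  · rw [Classical.not_imp] at hB
    rw [← sub_smul, mul_smul_comm, ← mul_assoc, ← prod_insert hB.2]
    exact Subalgebra.smul_mem _ (mul_mem (prod_X_mem_swapInvariants (by simp [hB.1]))
      (hsymm B fun h => absurd h hB.2)) _

lemma towerGF_swap_invariance (q : R) (m : ℕ) (hab : a ⋖ b) :
    (∀ A : Finset α, (b ∈ A → a ∈ A) → towerGF q m A ∈ swapInvariants R a b) ∧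
      ∀ A : Finset α,
        X b * (towerGF q m (A.map (Equiv.swap a b).toEmbedding) - towerGF q m A) ∈
          swapInvariants R a b := by
  induction m with
  | zero => exact ⟨fun _ _ => one_mem _, fun A => by simp [towerGF, zero_mem]⟩
  | succ m ih => exact ⟨fun A => towerGF_succ_mem_swapInvariants hab ih.1 ih.2,
      X_mul_towerGF_succ_sub_mem_swapInvariants hab ih.1⟩

end TowerGF

lemma towerGF_isSymmetric {R : Type*} [CommRing R] {n : ℕ} (q : R) (m : ℕ)
    {A : Finset (Fin n)} (hA : IsLowerSet (A : Set (Fin n))) : (towerGF q m A).IsSymmetric :=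
  isSymmetric_of_mem_swapInvariants fun _ _ hij =>
    (towerGF_swap_invariance q m hij).1 A (hA hij.le)

section Rescale

variable {σ R : Type*} [CommRing R]

/-- The substitution multiplying each variable `X i` by the scalar `c i`. -/
noncomputable def rescale (c : σ → R) : MvPolynomial σ R →ₐ[R] MvPolynomial σ R :=
  aeval fun i => c i • X i

lemma coeff_rescale (c : σ → R) (κ : σ →₀ ℕ) (p : MvPolynomial σ R) :
    coeff κ (rescale c p) = (κ.prod fun i e => c i ^ e) * coeff κ p := by
  classical
  induction p using MvPolynomial.induction_on' with
  | monomial u a =>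
    have hmonomial : rescale c (monomial u a) = (u.prod fun i e => c i ^ e) • monomial u a := by
      rw [rescale, aeval_monomial, monomial_eq, algebraMap_eq, ← mul_smul_comm]
      simp only [Finsupp.prod, smul_pow, prod_smul]
    rw [hmonomial, coeff_smul, coeff_monomial, smul_eq_mul]
    split_ifs with h
    · rw [h]
    · rw [mul_zero, mul_zero]
  | add p q hp hq => rw [map_add, coeff_add, coeff_add, hp, hq, mul_add]

end Rescale

section Rotate

variable {p r : ℕ}

variable (p r) in
/-- The cyclic shift of the letters carrying the top `r` letters to the bottom. -/
def rotate : Equiv.Perm (Fin (p + r)) := finAddFlip.trans (finCongr (Nat.add_comm r p))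

lemma val_rotate (i : Fin (p + r)) : (rotate p r i : ℕ) = if p ≤ i then i - p else r + i := by
  induction i using Fin.addCases <;> simp [rotate, Nat.add_comm]

variable (p r) in
/-- The top `r` letters. -/
def topLetters : Finset (Fin (p + r)) := univ.map (Fin.natAddEmb p)

variable (p r) in
/-- The bottom `r` letters. -/
def bottomLetters : Finset (Fin (p + r)) := univ.map (Fin.castLEEmb (Nat.le_add_left r p))

lemma mem_topLetters {i : Fin (p + r)} : i ∈ topLetters p r ↔ p ≤ (i : ℕ) := by
  simp only [topLetters, mem_map, mem_univ, true_and, Fin.natAddEmb_apply, Fin.ext_iff,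
    Fin.val_natAdd]
  exact ⟨fun ⟨c, hc⟩ => hc ▸ Nat.le_add_right p c,
    fun h => ⟨⟨i - p, by omega⟩, Nat.add_sub_cancel' h⟩⟩

lemma isUpperSet_topLetters : IsUpperSet (topLetters p r : Set (Fin (p + r))) := by
  intro i j hij hi
  rw [mem_coe, mem_topLetters] at hi ⊢
  exact hi.trans hij

lemma mem_bottomLetters {i : Fin (p + r)} : i ∈ bottomLetters p r ↔ (i : ℕ) < r := by
  simp only [bottomLetters, mem_map, mem_univ, true_and, Fin.castLEEmb_apply, Fin.ext_iff,
    Fin.val_castLE]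
  exact ⟨fun ⟨c, hc⟩ => hc ▸ c.2, fun h => ⟨⟨i, h⟩, rfl⟩⟩

lemma isLowerSet_bottomLetters : IsLowerSet (bottomLetters p r : Set (Fin (p + r))) := by
  intro i j hij hi
  rw [mem_coe, mem_bottomLetters] at hi ⊢
  exact (Fin.le_def.1 hij).trans_lt hi

lemma map_rotate_topLetters :
    (topLetters p r).map (rotate p r).toEmbedding = bottomLetters p r := by
  rw [topLetters, bottomLetters, map_map]
  congr 1
  ext c
  simp [val_rotate]

lemma card_filter_map_rotate_notMem_bottomLetters (A : Finset (Fin (p + r))) :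
    #{c ∈ A.map (rotate p r).toEmbedding | c ∉ bottomLetters p r} =
      #{a ∈ A | a ∉ topLetters p r} := by
  rw [← map_rotate_topLetters, filter_map, card_map]
  exact congrArg card (filter_congr fun a _ => not_congr (mem_map' _))

lemma card_topLetters : #(topLetters p r) = r := by
  rw [topLetters, card_map, card_univ, Fintype.card_fin]

lemma card_filter_ge_map_rotate (A : Finset (Fin (p + r))) (y : Fin (p + r)) :
    #{c ∈ A.map (rotate p r).toEmbedding | rotate p r y ≤ c} + #{a ∈ A | a ∈ topLetters p r} =
      #{a ∈ A | y ≤ a} + if y ∈ topLetters p r then #A else 0 := by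
  have hletter (a : Fin (p + r)) :
      ((if rotate p r y ≤ rotate p r a then 1 else 0) + if a ∈ topLetters p r then 1 else 0) =
        (if y ≤ a then 1 else 0) + if y ∈ topLetters p r then 1 else 0 := by
    simp only [Fin.le_def, val_rotate, mem_topLetters]
    have := a.2
    have := y.2
    split_ifs <;> omega
  rw [← mul_boole]
  simp only [card_filter, sum_map, Equiv.coe_toEmbedding, ← smul_eq_mul, ← sum_const,
    ← sum_add_distrib, hletter]

lemma wraps_map_rotate {A B : Finset (Fin (p + r))} (hAB : #A = #B) :
    wraps (A.map (rotate p r).toEmbedding) (B.map (rotate p r).toEmbedding) +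
        #{a ∈ A | a ∈ topLetters p r} = wraps A B + #{b ∈ B | b ∈ topLetters p r} := by
  have hcountA := card_filter_ge_map_rotate A
  have hcountB := card_filter_ge_map_rotate B
  rw [hAB] at hcountA
  set A' := A.map (rotate p r).toEmbedding
  set B' := B.map (rotate p r).toEmbedding
  have htop : #{a ∈ A | a ∈ topLetters p r} ≤ #{b ∈ B | b ∈ topLetters p r} + wraps A B :=
    card_filter_le_add_wraps A B fun _ _ h => isUpperSet_topLetters h
  have htop' : #{b ∈ B | b ∈ topLetters p r} ≤ #{a ∈ A | a ∈ topLetters p r} + wraps A' B' := by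
    have hbottom := card_filter_le_add_wraps A' B' (P := (· ∉ bottomLetters p r))
      fun _ _ h hx hy => hx (isLowerSet_bottomLetters h hy)
    rw [card_filter_map_rotate_notMem_bottomLetters,
      card_filter_map_rotate_notMem_bottomLetters] at hbottom
    have hA := card_filter_add_card_filter_not (s := A) (· ∈ topLetters p r)
    have hB := card_filter_add_card_filter_not (s := B) (· ∈ topLetters p r)
    omega
  apply le_antisymm
  · rw [← Nat.le_sub_iff_add_le (by omega), wraps_le_iff, (rotate p r).surjective.forall]
    intro y
    specialize hcountA y
    specialize hcountB y
    have := wraps_le_iff.1 (le_refl (wraps A B)) y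
    omega
  · rw [← Nat.le_sub_iff_add_le (by omega), wraps_le_iff]
    intro y
    specialize hcountA y
    specialize hcountB y
    have := wraps_le_iff.1 (le_refl (wraps A' B')) (rotate p r y)
    omega

variable {R : Type*} [CommRing R]

lemma rename_rotate_rescale_prod (q : R) (B : Finset (Fin (p + r))) :
    rename (rotate p r) (rescale (fun i => if i ∈ topLetters p r then q else 1) (∏ b ∈ B, X b)) =
      q ^ #{b ∈ B | b ∈ topLetters p r} • ∏ b ∈ B.map (rotate p r).toEmbedding, X b := by
  simp only [rescale, map_prod, aeval_X, map_smul, rename_X, prod_smul, prod_map,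
    Equiv.coe_toEmbedding, prod_ite, prod_const, one_pow, mul_one]

lemma rename_rotate_rescale_towerGF (q : R) (m : ℕ) (A : Finset (Fin (p + r))) :
    rename (rotate p r)
        (rescale (fun i => if i ∈ topLetters p r then q else 1) (towerGF q m A)) =
      q ^ (m * #{a ∈ A | a ∈ topLetters p r}) •
        towerGF q m (A.map (rotate p r).toEmbedding) := by
  induction m generalizing A with
  | zero => simp only [towerGF, map_one, zero_mul, pow_zero, one_smul]
  | succ m ih =>
    simp only [towerGF, map_sum, smul_sum]
    refine sum_equiv (rotate p r).finsetCongr (fun B => ?_) fun B hB => ?_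
    · simp only [mem_powersetCard_univ, Equiv.finsetCongr_apply, card_map]
    rw [mem_powersetCard_univ] at hB
    simp only [map_smul, map_mul, rename_rotate_rescale_prod, ih, Equiv.finsetCongr_apply,
      smul_mul_smul_comm, smul_smul, ← pow_add]
    congr 2
    linear_combination (m + 1) * (wraps_map_rotate hB.symm).symm

lemma rescale_towerGF_topLetters (q : R) (m : ℕ) :
    rescale (fun i => if i ∈ topLetters p r then q else 1) (towerGF q m (topLetters p r)) =
      q ^ (m * r) • towerGF q m (bottomLetters p r) := by
  apply rename_injective _ (rotate p r).injective
  rw [rename_rotate_rescale_towerGF, filter_mem_eq_inter, inter_self, card_topLetters,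
    map_rotate_topLetters, map_smul, towerGF_isSymmetric q m isLowerSet_bottomLetters]

end Rotate

section CyclicNext

variable {α β : Type*} [LinearOrder α] [LinearOrder β]

/-- `b` is the first element of `S` met when moving up cyclically from `a`: the least element of
`S` that is at least `a`, or the least element of `S` if there is none. -/
def IsCyclicNext (S : Set α) (a b : α) : Prop :=
  IsLeast {c ∈ S | a ≤ c} b ∨ (∀ c ∈ S, c < a) ∧ IsLeast S b

variable {S : Set α} {a b c : α}

lemma IsCyclicNext.mem (h : IsCyclicNext S a b) : b ∈ S :=
  h.elim (fun h => h.1.1) fun h => h.2.1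

lemma IsCyclicNext.unique (hb : IsCyclicNext S a b) (hc : IsCyclicNext S a c) : b = c := by
  obtain hb | ⟨hbS, hb⟩ := hb <;> obtain hc | ⟨hcS, hc⟩ := hc
  · exact hb.unique hc
  · exact absurd (hcS b hb.1.1) hb.1.2.not_gt
  · exact absurd (hbS c hc.1.1) hc.1.2.not_gt
  · exact hb.unique hc

lemma exists_isCyclicNext (hS : S.Finite) (hne : S.Nonempty) (a : α) :
    ∃ b, IsCyclicNext S a b := by
  by_cases h : {c ∈ S | a ≤ c}.Nonempty
  · obtain ⟨b, hb⟩ := (hS.subset (Set.sep_subset _ _)).exists_minimal h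
    exact ⟨b, .inl (minimal_iff_isLeast.1 hb)⟩
  · obtain ⟨b, hb⟩ := hS.exists_minimal hne
    exact ⟨b, .inr ⟨fun c hc => not_le.1 fun hac => h ⟨c, hc, hac⟩, minimal_iff_isLeast.1 hb⟩⟩

lemma isCyclicNext_image_iff {f : α → β} (hf : StrictMono f) :
    IsCyclicNext (f '' S) (f a) (f b) ↔ IsCyclicNext S a b := by
  simp [IsCyclicNext, IsLeast, lowerBounds, hf.le_iff_le, hf.lt_iff_lt, hf.injective.eq_iff]

lemma IsCyclicNext.lt_of_lt (h : IsCyclicNext S a b) (hba : b < a) : ∀ c ∈ S, c < a :=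
  h.elim (fun h => absurd hba h.1.2.not_gt) And.left

lemma IsCyclicNext.le_and_lt_of_lt (h : IsCyclicNext S a b) (hc : c ∈ S) (hcb : c < b) :
    a ≤ b ∧ c < a := by
  obtain h | h := h
  · exact ⟨h.1.2, not_le.1 fun hac => hcb.not_ge (h.2 ⟨hc, hac⟩)⟩
  · exact absurd (h.2.2 hc) hcb.not_ge

end CyclicNext

section GreedyStep

lemma card_filter_image {ι α : Type*} [Fintype ι] [DecidableEq α] {v : ι → α}
    (hv : Function.Injective v) (P : α → Prop) [DecidablePred P] :
    #{a ∈ univ.image v | P a} = #{i | P (v i)} := by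
  rw [filter_image, card_image_of_injective _ hv]

variable {ι α : Type*} [LinearOrder ι] [LinearOrder α]

/-- The word `v` is obtained from `w` by the greedy rule: processing the positions from the top
down, `v i` is the first unused letter of `v` reached cyclically from `w i`. -/
structure IsGreedyStep (w v : ι → α) : Prop where
  injective : Function.Injective v
  isCyclicNext (i : ι) : IsCyclicNext (v '' Set.Iic i) (w i) (v i)

lemma IsGreedyStep.ne_of_lt {w v : ι → α}
    (h : IsGreedyStep w v) {i j : ι} (hij : i < j) : v i ≠ w j := by
  intro heq
  have hmem : w j ∈ v '' Set.Iic j := ⟨i, hij.le, heq⟩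
  have hself : IsCyclicNext (v '' Set.Iic j) (w j) (w j) := .inl ⟨⟨hmem, le_rfl⟩, fun _ h => h.2⟩
  exact h.injective.ne hij.ne (heq.trans (hself.unique (h.isCyclicNext j)))

variable [Fintype ι]

lemma IsGreedyStep.eq_of_image_eq {w v v' : ι → α} (hv : IsGreedyStep w v)
    (hv' : IsGreedyStep w v') (himage : univ.image v = univ.image v') : v = v' := by
  have hrange : Set.range v = Set.range v' := by
    simpa only [coe_image, coe_univ, Set.image_univ] using congrArg (↑· : Finset α → Set α) himage
  funext i
  induction i using WellFoundedGT.induction with | _ i ih =>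
  have hIic : v '' Set.Iic i = v' '' Set.Iic i := by
    rw [← Set.compl_Ioi, Set.image_compl_eq_range_sdiff_image hv.injective,
      Set.image_compl_eq_range_sdiff_image hv'.injective, hrange,
      Set.image_congr (g := v') (s := Set.Ioi i) ih]
  exact (hv.isCyclicNext i).unique (hIic ▸ hv'.isCyclicNext i)

lemma exists_forall_isCyclicNext_unused (w : ι → α) {B : Finset α} (hB : Fintype.card ι ≤ #B) :
    ∃ v : ι → α, ∀ i,
      IsCyclicNext (({b ∈ B | ∀ j, i < j → v j ≠ b} : Finset α) : Set α) (w i) (v i) := by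
  have hex (S : Finset α) (a : α) : ∃ b, S.Nonempty → IsCyclicNext (S : Set α) a b := by
    obtain rfl | hS := S.eq_empty_or_nonempty
    · exact ⟨a, fun h => absurd h not_nonempty_empty⟩
    · exact (exists_isCyclicNext S.finite_toSet hS a).imp fun _ hb _ => hb
  choose next hnext using hex
  obtain ⟨v, hv⟩ : ∃ v : ι → α, ∀ i, v i = next {b ∈ B | ∀ j, i < j → v j ≠ b} (w i) :=
    ⟨_, WellFounded.fix_eq (wellFounded_gt (α := ι)) fun i v =>
      next {b ∈ B | ∀ j, ∀ h : i < j, v j h ≠ b} (w i)⟩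
  refine ⟨v, fun i => ?_⟩
  have hcard : #(image v {j | i < j}) < #B :=
    (card_image_le.trans_lt (card_lt_univ_of_notMem (x := i) (by simp))).trans_le hB
  obtain ⟨b, hb, hvb⟩ := exists_mem_notMem_of_card_lt_card hcard
  have := hnext {b ∈ B | ∀ j, i < j → v j ≠ b} (w i)
    ⟨b, mem_filter.2 ⟨hb, by simpa using hvb⟩⟩
  rwa [← hv] at this

lemma exists_isGreedyStep (w : ι → α) {B : Finset α} (hB : #B = Fintype.card ι) :
    ∃ v, IsGreedyStep w v ∧ univ.image v = B := by
  obtain ⟨v, hv⟩ := exists_forall_isCyclicNext_unused w hB.ge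
  have hmem (i : ι) : v i ∈ B ∧ ∀ j, i < j → v j ≠ v i := mem_filter.1 (hv i).mem
  have hinj : Function.Injective v := .of_lt_imp_ne fun i j hij => ((hmem i).2 j hij).symm
  have himage : univ.image v = B :=
    eq_of_subset_of_card_le (image_subset_iff.2 fun i _ => (hmem i).1)
      (by rw [card_image_of_injective _ hinj, hB, card_univ])
  refine ⟨v, ⟨hinj, fun i => ?_⟩, himage⟩
  convert hv i
  ext b
  simp only [← himage, coe_filter, mem_image, mem_univ, true_and, Set.mem_image, Set.mem_Iic,
    Set.mem_ofPred_eq]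
  constructor
  · rintro ⟨k, hk, rfl⟩
    exact ⟨⟨k, rfl⟩, fun j hj => hinj.ne (hk.trans_lt hj).ne'⟩
  · rintro ⟨⟨k, rfl⟩, h⟩
    exact ⟨k, not_lt.1 fun hk => h k hk rfl, rfl⟩

open Classical in
lemma sum_isGreedyStep_image {M : Type*} [AddCommMonoid M] [Fintype α] (w : ι → α)
    (F : Finset α → M) :
    ∑ v : ι → α with IsGreedyStep w v, F (univ.image v) =
      ∑ B ∈ powersetCard (Fintype.card ι) univ, F B := by
  refine sum_nbij (univ.image ·) (fun v hv => ?_) (fun v hv v' hv' => ?_) (fun B hB => ?_)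
    fun _ _ => rfl
  · rw [mem_powersetCard_univ, card_image_of_injective _ (mem_filter.1 hv).2.injective, card_univ]
  · exact (mem_filter.1 hv).2.eq_of_image_eq (mem_filter.1 hv').2
  · obtain ⟨v, hv, rfl⟩ := exists_isGreedyStep w (mem_powersetCard_univ.1 hB)
    exact ⟨v, by simpa using hv, rfl⟩

/-- The number of positions at which a step from the word `w` to the word `v` goes down. -/
def descents (w v : ι → α) : ℕ := #{i | v i < w i}

lemma IsGreedyStep.exists_add_descents_le {w v : ι → α} (h : IsGreedyStep w v)
    (hne : ∃ i, v i < w i) : ∃ y, #{i | y < v i} + descents w v ≤ #{i | y < w i} := by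
  obtain ⟨p, hp, hpmin⟩ := exists_min_image {i | v i < w i} id (by simpa [Finset.Nonempty])
  obtain ⟨q, hq, hqmax⟩ := exists_max_image {i | i ≤ p} v ⟨p, by simp⟩
  simp only [mem_filter, mem_univ, true_and, id] at hp hpmin hq hqmax
  have hq_mem {i : ι} (hi : p ≤ i) : v q ∈ v '' Set.Iic i := ⟨q, hq.trans hi, rfl⟩
  have hwrap (i : ι) (hi : v i < w i) : v q < w i :=
    (h.isCyclicNext i).lt_of_lt hi _ (hq_mem (hpmin i hi))
  have hstay (i : ι) (hi : v q < v i) : w i ≤ v i ∧ v q < w i :=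
    (h.isCyclicNext i).le_and_lt_of_lt (hq_mem (le_of_not_ge fun hip => (hqmax i hip).not_gt hi)) hi
  refine ⟨v q, ?_⟩
  rw [descents, ← card_union_of_disjoint (disjoint_filter.2 fun i _ hi => (hstay i hi).1.not_gt)]
  refine card_le_card fun i => ?_
  simp only [mem_union, mem_filter, mem_univ, true_and]
  exact fun hi => hi.elim (fun hi => (hstay i hi).2) (hwrap i)

theorem IsGreedyStep.descents_eq_wraps {w v : ι → α} (hw : Function.Injective w)
    (h : IsGreedyStep w v) : descents w v = wraps (univ.image w) (univ.image v) := by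
  apply le_antisymm
  · by_cases hne : ∃ i, v i < w i
    · obtain ⟨y, hy⟩ := h.exists_add_descents_le hne
      have := card_filter_le_add_wraps (univ.image w) (univ.image v) (P := (y < ·))
        fun _ _ h h' => h'.trans_le h
      rw [card_filter_image hw, card_filter_image h.injective] at this
      omega
    · rw [descents, filter_false_of_mem fun i _ hi => hne ⟨i, hi⟩]
      exact Nat.zero_le _
  · refine wraps_le_iff.2 fun x => ?_
    rw [card_filter_image hw, card_filter_image h.injective]
    refine (card_le_card fun i => ?_).trans (card_union_le _ _)
    simp only [mem_filter, mem_univ, true_and, mem_union]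
    exact fun hx => or_iff_not_imp_right.2 fun hi => hx.trans (not_lt.1 hi)

end GreedyStep

section GreedyTower

variable {ι α : Type*} [LinearOrder α] {m : ℕ}

/-- The words `g 0, g 1, …, g m` form a tower in which each one is obtained from the previous one
by the greedy rule. -/
def IsGreedyTower [LinearOrder ι] (g : Fin (m + 1) → ι → α) : Prop :=
  ∀ j : Fin m, IsGreedyStep (g j.castSucc) (g j.succ)

/-- The total number of descents of a tower of words, those of a step being counted with the
number of words above it. -/
def towerDescents [Fintype ι] (g : Fin (m + 1) → ι → α) : ℕ :=
  ∑ j : Fin m, (m - j) * descents (g j.castSucc) (g j.succ)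

lemma isGreedyTower_cons_iff [LinearOrder ι] {w : ι → α} {g : Fin (m + 1) → ι → α} :
    IsGreedyTower (Fin.cons w g : Fin (m + 2) → ι → α) ↔
      IsGreedyStep w (g 0) ∧ IsGreedyTower g := by
  simp only [IsGreedyTower, Fin.forall_fin_succ, Fin.castSucc_zero, Fin.cons_zero, Fin.cons_succ,
    ← Fin.succ_castSucc]

lemma IsGreedyTower.injective [LinearOrder ι] {g : Fin (m + 1) → ι → α} (h : IsGreedyTower g)
    (h0 : Function.Injective (g 0)) (j : Fin (m + 1)) : Function.Injective (g j) :=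
  j.cases h0 fun j => (h j).injective

lemma towerDescents_cons [Fintype ι] (w : ι → α) (g : Fin (m + 1) → ι → α) :
    towerDescents (Fin.cons w g : Fin (m + 2) → ι → α) =
      (m + 1) * descents w (g 0) + towerDescents g := by
  simp only [towerDescents, Fin.sum_univ_succ, Fin.castSucc_zero, Fin.cons_zero, Fin.cons_succ,
    ← Fin.succ_castSucc, Fin.val_zero, Nat.sub_zero, Fin.val_succ, Nat.add_sub_add_right]

open Classical in
theorem sum_isGreedyTower {R : Type*} [CommRing R] [Fintype α] [LinearOrder ι] [Fintype ι]
    (q : R) (m : ℕ) {w : ι → α} (hw : Function.Injective w) :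
    ∑ h : Fin m → ι → α with IsGreedyTower (Fin.cons w h : Fin (m + 1) → ι → α),
        q ^ towerDescents (Fin.cons w h : Fin (m + 1) → ι → α) • ∏ j, ∏ i, X (h j i) =
      towerGF q m (univ.image w) := by
  induction m generalizing w with
  | zero => simp [IsGreedyTower, towerDescents, towerGF]
  | succ m ih =>
    have hcons (v : ι → α) (h : Fin m → ι → α) :
        (if IsGreedyTower (Fin.cons w (Fin.cons v h) : Fin (m + 2) → ι → α) then
          q ^ towerDescents (Fin.cons w (Fin.cons v h) : Fin (m + 2) → ι → α) •
            ∏ j, ∏ i, (X ((Fin.cons v h : Fin (m + 1) → ι → α) j i) : MvPolynomial α R) else 0) =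
        if IsGreedyStep w v then q ^ ((m + 1) * descents w v) • ((∏ i, X (v i)) *
          if IsGreedyTower (Fin.cons v h : Fin (m + 1) → ι → α) then
            q ^ towerDescents (Fin.cons v h : Fin (m + 1) → ι → α) • ∏ j, ∏ i, X (h j i)
          else 0) else 0 := by
      simp only [isGreedyTower_cons_iff, towerDescents_cons, Fin.cons_zero, ite_and,
        Fin.prod_univ_succ, Fin.cons_succ, pow_add, mul_ite, smul_ite, mul_zero, smul_zero,
        mul_smul, mul_smul_comm]
    calc
      _ = ∑ v, ∑ h : Fin m → ι → α, if IsGreedyStep w v then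
            q ^ ((m + 1) * descents w v) • ((∏ i, X (v i)) *
              if IsGreedyTower (Fin.cons v h : Fin (m + 1) → ι → α) then
                q ^ towerDescents (Fin.cons v h : Fin (m + 1) → ι → α) • ∏ j, ∏ i, X (h j i)
              else 0) else 0 := by
        rw [sum_filter, ← (Fin.consEquiv fun _ => ι → α).sum_comp, Fintype.sum_prod_type]
        exact sum_congr rfl fun v _ => sum_congr rfl fun h _ => hcons v h
      _ = ∑ v with IsGreedyStep w v, q ^ ((m + 1) * wraps (univ.image w) (univ.image v)) •
            ((∏ b ∈ univ.image v, X b) * towerGF q m (univ.image v)) := by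
        rw [sum_filter]
        refine sum_congr rfl fun v _ => ?_
        split_ifs with hv
        · rw [← smul_sum, ← mul_sum, ← sum_filter, ih hv.injective, hv.descents_eq_wraps hw,
            prod_image hv.injective.injOn]
        · exact sum_const_zero
      _ = _ := by
        rw [sum_isGreedyStep_image w fun B => q ^ ((m + 1) * wraps (univ.image w) B) •
          ((∏ b ∈ B, X b) * towerGF q m B), towerGF, card_image_of_injective _ hw, card_univ]

end GreedyTower

section Rectangle

/-- The composition `(0, …, 0, m + 1, …, m + 1)` with `p` zeros, indexed from one; its length is
left to the diagram functions, so the parts `m + 1` go on forever. -/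
def rect (p m : ℕ) : ℕ → ℕ := fun i => if p + 1 ≤ i then m + 1 else 0

variable {p r m : ℕ}

lemma rect_of_le {i : ℕ} (hi : p + 1 ≤ i) : rect p m i = m + 1 := if_pos hi

lemma mem_dgF_rect {u : ℕ × ℕ} : u ∈ dgF (p + r) (rect p m) ↔
    (p + 1 ≤ u.1 ∧ u.1 ≤ p + r) ∧ 1 ≤ u.2 ∧ u.2 ≤ m + 1 := by
  obtain ⟨i, j⟩ := u
  simp only [dgF, rect, mem_biUnion, mem_image, mem_Icc, Prod.mk.injEq]
  constructor
  · rintro ⟨i, hi, j, hj, rfl, rfl⟩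
    split_ifs at hj <;> omega
  · rintro ⟨hi, hj⟩
    exact ⟨i, by omega, j, by rwa [if_pos hi.1], rfl, rfl⟩

/-- The box in row `j` and column `c` of the rectangle of nonzero parts of `rect p m`, both counted
from zero. -/
def rectBox (p : ℕ) (j : Fin (m + 1)) (c : Fin r) : ℕ × ℕ := (p + 1 + c, j + 1)

lemma rect_rectBox (j : Fin (m + 1)) (c : Fin r) : rect p m (rectBox p j c).1 = m + 1 :=
  rect_of_le (Nat.le_add_right _ _)

/-- The enumeration of the boxes of the rectangle by `rectBox`. -/
def rectEquiv (p r m : ℕ) : Fin (m + 1) × Fin r ≃ {u // u ∈ dgF (p + r) (rect p m)} where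
  toFun x := ⟨rectBox p x.1 x.2, mem_dgF_rect.2 (by simp only [rectBox]; omega)⟩
  invFun u := (⟨u.1.2 - 1, by have := mem_dgF_rect.1 u.2; omega⟩,
    ⟨u.1.1 - (p + 1), by have := mem_dgF_rect.1 u.2; omega⟩)
  left_inv x := by simp [rectBox]
  right_inv u := by
    have := mem_dgF_rect.1 u.2
    ext <;> simp only [rectBox] <;> omega

lemma forall_mem_dgF_rect {P : ℕ × ℕ → Prop} :
    (∀ u ∈ dgF (p + r) (rect p m), P u) ↔ ∀ (j : Fin (m + 1)) (c : Fin r), P (rectBox p j c) := by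
  rw [← Prod.forall', Subtype.forall', ← (rectEquiv p r m).forall_congr_right]
  rfl

lemma sum_dgF_rect {M : Type*} [AddCommMonoid M] (F : ℕ × ℕ → M) :
    ∑ u ∈ dgF (p + r) (rect p m), F u = ∑ j : Fin (m + 1), ∑ c : Fin r, F (rectBox p j c) := by
  rw [← sum_coe_sort, ← Fintype.sum_prod_type']
  exact ((rectEquiv p r m).sum_comp fun u => F u).symm

lemma attack_rectBox_iff {j j' : Fin (m + 1)} {c c' : Fin r} :
    Attack (rectBox p j c) (rectBox p j' c') ↔ (j = j' → c ≠ c') ∧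
      (j = j' ∨ ((j : ℕ) = j' + 1 ∧ c < c') ∨ ((j' : ℕ) = j + 1 ∧ c' < c)) := by
  simp only [Attack, rectBox, ne_eq, Prod.mk.injEq, Fin.ext_iff, Fin.lt_def]
  omega

lemma dbox_rectBox_succ (j : Fin m) (c : Fin r) :
    dbox (rectBox p j.succ c) = rectBox p j.castSucc c := by
  simp [dbox, rectBox]

lemma mem_armF_rect {j : Fin m} {c : Fin r} {u : ℕ × ℕ} :
    u ∈ armF (p + r) (rect p m) (rectBox p j.succ c) ↔ ∃ d < c, rectBox p j.succ d = u := by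
  obtain ⟨i, l⟩ := u
  rw [armF, mem_union, mem_filter, mem_filter, mem_dgF_rect, rect_rectBox]
  simp only [rectBox, Prod.mk.injEq, Fin.val_succ, Fin.lt_def]
  constructor
  · rintro (⟨⟨hi, -⟩, hlt, hl, -⟩ | ⟨-, hlt, -, hparts⟩)
    · exact ⟨⟨i - (p + 1), by omega⟩, Nat.sub_lt_left_of_lt_add hi.1 hlt,
        Nat.add_sub_cancel' hi.1, hl.symm⟩
    · exact absurd (rect_of_le (by omega)) hparts.ne
  · rintro ⟨d, hd, rfl, rfl⟩
    rw [rect_of_le (by omega)]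
    omega

/-- The filling of the rectangle whose rows are the words `g 0, g 1, …, g m`. -/
def rectFilling (g : Fin (m + 1) → Fin r → Fin (p + r)) :
    {u // u ∈ dgF (p + r) (rect p m)} → ℕ :=
  fun u => g ((rectEquiv p r m).symm u).1 ((rectEquiv p r m).symm u).2 + 1

lemma ext_rectFilling (g : Fin (m + 1) → Fin r → Fin (p + r)) (j : Fin (m + 1)) (c : Fin r) :
    ext (p + r) (rect p m) (rectFilling g) (rectBox p j c) = g j c + 1 := by
  have hbox : (rectEquiv p r m (j, c) : ℕ × ℕ) = rectBox p j c := rfl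
  rw [← hbox, ext, dif_pos (rectEquiv p r m (j, c)).2, rectFilling, Subtype.coe_eta,
    Equiv.symm_apply_apply]

lemma rectFilling_injective :
    Function.Injective (rectFilling : (Fin (m + 1) → Fin r → Fin (p + r)) → _) := by
  intro g g' h
  funext j c
  have := congrFun h (rectEquiv p r m (j, c))
  simpa [rectFilling, Fin.ext_iff] using this

lemma exists_rectFilling_eq {f : {u // u ∈ dgF (p + r) (rect p m)} → ℕ}
    (hf : ∀ u, 1 ≤ f u ∧ f u ≤ p + r) : ∃ g, rectFilling g = f := by
  refine ⟨fun j c => ⟨f (rectEquiv p r m (j, c)) - 1, ?_⟩, funext fun u => ?_⟩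
  · have := hf (rectEquiv p r m (j, c))
    omega
  · simp only [rectFilling, Prod.mk.eta, Equiv.apply_symm_apply]
    have := hf u
    omega

end Rectangle

section FillingsAndTowers

lemma isCyclicNext_nat_iff {S : Set ℕ} {a b : ℕ} (hb : b ∈ S) : IsCyclicNext S a b ↔
    ({x ∈ S | a ≤ x}.Nonempty → b = sInf {x ∈ S | a ≤ x}) ∧
      (¬{x ∈ S | a ≤ x}.Nonempty → b = sInf S) := by
  have hleast {T : Set ℕ} (hT : T.Nonempty) : IsLeast T b ↔ b = sInf T :=
    ⟨fun h => h.csInf_eq.symm, fun h => h ▸ isLeast_csInf hT⟩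
  by_cases hne : {x ∈ S | a ≤ x}.Nonempty
  · have : ¬∀ c ∈ S, c < a := fun h => hne.elim fun x hx => (h x hx.1).not_ge hx.2
    simp only [IsCyclicNext, this, hleast hne, hne, false_and, or_false, forall_const,
      not_true_eq_false, IsEmpty.forall_iff, and_true]
  · have hlt : ∀ c ∈ S, c < a := fun c hc => not_le.1 fun hac => hne ⟨c, hc, hac⟩
    have : ¬IsLeast {x ∈ S | a ≤ x} b := fun h => hne ⟨b, h.1⟩
    simp only [IsCyclicNext, this, hleast ⟨b, hb⟩, hne, false_or, IsEmpty.forall_iff,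
      not_false_eq_true, true_and, forall_const, and_iff_right hlt]

variable {p r m : ℕ} {g : Fin (m + 1) → Fin r → Fin (p + r)} {τ : ℕ × ℕ → ℕ}

lemma image_armF_rect (hτ : ∀ j c, τ (rectBox p j c) = g j c + 1) (j : Fin m) (c : Fin r) :
    τ '' ↑(armF (p + r) (rect p m) (rectBox p j.succ c)) ∪ {τ (rectBox p j.succ c)} =
      (fun x : Fin (p + r) => (x : ℕ) + 1) '' (g j.succ '' Set.Iic c) := by
  ext y
  simp only [Set.mem_union, Set.mem_image, mem_coe, mem_armF_rect, Set.mem_singleton_iff,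
    Set.mem_Iic]
  constructor
  · rintro (⟨_, ⟨d, hd, rfl⟩, rfl⟩ | rfl)
    · exact ⟨_, ⟨d, hd.le, rfl⟩, (hτ _ _).symm⟩
    · exact ⟨_, ⟨c, le_rfl, rfl⟩, (hτ _ _).symm⟩
  · rintro ⟨_, ⟨d, hd, rfl⟩, rfl⟩
    obtain rfl | hd := hd.eq_or_lt
    · exact .inr (hτ _ _).symm
    · exact .inl ⟨_, ⟨d, hd, rfl⟩, hτ _ _⟩

lemma greedyRule_rect_iff (hτ : ∀ j c, τ (rectBox p j c) = g j c + 1) :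
    GreedyRule (p + r) (rect p m) τ ↔
      ∀ (j : Fin m) c, IsCyclicNext (g j.succ '' Set.Iic c) (g j.castSucc c) (g j.succ c) := by
  have hmono : StrictMono fun x : Fin (p + r) => (x : ℕ) + 1 := fun _ _ h => Nat.succ_lt_succ h
  have hfirst (x : Fin r) : ¬2 ≤ (rectBox (m := m) p 0 x).2 := by simp [rectBox]
  have hrow (j : Fin m) (x : Fin r) : 2 ≤ (rectBox p j.succ x).2 := by simp [rectBox]
  rw [GreedyRule, forall_mem_dgF_rect, Fin.forall_fin_succ]
  simp only [hfirst, hrow, IsEmpty.forall_iff, forall_const, implies_true, true_and]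
  refine forall₂_congr fun j c => ?_
  rw [← isCyclicNext_nat_iff (Set.mem_union_right _ (Set.mem_singleton _)), image_armF_rect hτ,
    dbox_rectBox_succ, hτ, hτ]
  exact isCyclicNext_image_iff hmono

lemma IsGreedyTower.ne_of_attack (hτ : ∀ j c, τ (rectBox p j c) = g j c + 1) (h : IsGreedyTower g)
    (h0 : Function.Injective (g 0)) : ∀ u ∈ dgF (p + r) (rect p m),
      ∀ v ∈ dgF (p + r) (rect p m), Attack u v → τ u ≠ τ v := by
  have hstep {j j' : Fin (m + 1)} {c c' : Fin r} (hj : (j : ℕ) = j' + 1) (hc : c < c') :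
      g j c ≠ g j' c' := by
    obtain ⟨i, rfl⟩ := Fin.exists_succ_eq.2 (show j ≠ 0 by rintro rfl; simp at hj)
    obtain rfl : j' = i.castSucc := Fin.ext (by simpa using hj.symm)
    exact (h i).ne_of_lt hc
  simp_rw [forall_mem_dgF_rect, attack_rectBox_iff, hτ, ne_eq, add_left_inj, Fin.val_inj]
  rintro j c j' c' ⟨hne, rfl | ⟨hj, hc⟩ | ⟨hj, hc⟩⟩
  · exact fun heq => hne rfl (h.injective h0 _ heq)
  · exact hstep hj hc
  · exact Ne.symm (hstep hj hc)

lemma firstRow_rect_iff {a : ℕ → ℕ} {w : Fin r → Fin (p + r)}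
    (hτ : ∀ j c, τ (rectBox p j c) = g j c + 1) (ha : ∀ c : Fin r, a (p + 1 + c) = w c + 1) :
    (∀ i, (i, 1) ∈ dgF (p + r) (rect p m) → τ (i, 1) = a i) ↔ g 0 = w := by
  have hbox (c : Fin r) : (p + 1 + (c : ℕ), 1) = rectBox p (0 : Fin (m + 1)) c := by simp [rectBox]
  constructor
  · intro h
    funext c
    have := h (p + 1 + c) (mem_dgF_rect.2 (by simp only; omega))
    rw [hbox, hτ, ha] at this
    exact Fin.ext (Nat.succ_injective this)
  · rintro rfl i hi
    obtain ⟨c, rfl⟩ : ∃ c : Fin r, p + 1 + c = i := by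
      have := (mem_dgF_rect.1 hi).1
      exact ⟨⟨i - (p + 1), by omega⟩, by simp only at this ⊢; omega⟩
    rw [hbox, hτ, ha]

lemma card_filter_dgF_rect (hτ : ∀ j c, τ (rectBox p j c) = g j c + 1) (y : Fin (p + r)) :
    #{u ∈ dgF (p + r) (rect p m) | τ u = y + 1} =
      #{x : Fin (m + 1) × Fin r | g x.1 x.2 = y} := by
  simp only [card_filter, sum_dgF_rect, Fintype.sum_prod_type, hτ, add_left_inj, Fin.val_inj]

lemma cCond_rect_iff {a k : ℕ → ℕ} {w : Fin r → Fin (p + r)}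
    (hτ : ∀ j c, τ (rectBox p j c) = g j c + 1) (hw : Function.Injective w)
    (ha : ∀ c : Fin r, a (p + 1 + c) = w c + 1) :
    CCond (p + r) (rect p m) a k τ ↔ g 0 = w ∧ IsGreedyTower g ∧
      ∀ y : Fin (p + r), #{x : Fin (m + 1) × Fin r | g x.1 x.2 = y} = k (y + 1) := by
  rw [CCond, firstRow_rect_iff hτ ha, greedyRule_rect_iff hτ]
  constructor
  · rintro ⟨-, h0, hattack, hgreedy, hk⟩
    have hinj (j : Fin (m + 1)) : Function.Injective (g j) := by
      intro c c' h
      by_contra hne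
      rw [forall_mem_dgF_rect] at hattack
      refine forall_mem_dgF_rect.1 (hattack j c) j c'
        (attack_rectBox_iff.2 ⟨fun _ => hne, .inl rfl⟩) ?_
      rw [hτ, hτ, h]
    refine ⟨h0, fun j => ⟨hinj _, hgreedy j⟩, fun y => ?_⟩
    rw [← card_filter_dgF_rect hτ, hk _ (by omega) (by omega)]
  · rintro ⟨rfl, hg, hk⟩
    refine ⟨forall_mem_dgF_rect.2 fun j c => ?_, rfl, hg.ne_of_attack hτ hw,
      fun j => (hg j).isCyclicNext, fun i hi hin => ?_⟩
    · rw [hτ]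
      omega
    · obtain ⟨y, rfl⟩ : ∃ y : Fin (p + r), (y : ℕ) + 1 = i :=
        ⟨⟨i - 1, by omega⟩, by simp only; omega⟩
      rw [card_filter_dgF_rect hτ, hk]

lemma ascStat_rect (hτ : ∀ j c, τ (rectBox p j c) = g j c + 1) :
    ascStat (p + r) (rect p m) τ = towerDescents g := by
  rw [ascStat, sum_filter, sum_dgF_rect, Fin.sum_univ_succ, towerDescents]
  have hfirst (c : Fin r) : ¬2 ≤ (rectBox (m := m) p 0 c).2 := by simp [rectBox]
  have hrow (j : Fin m) (c : Fin r) : 2 ≤ (rectBox p j.succ c).2 := by simp [rectBox]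
  have hleg (j : Fin m) (c : Fin r) :
      rect p m (rectBox p j.succ c).1 - (rectBox p j.succ c).2 + 1 = m - j := by
    rw [rect_rectBox]
    simp only [rectBox, Fin.val_succ]
    omega
  simp only [hfirst, hrow, hleg, dbox_rectBox_succ, hτ, false_and, true_and, if_false,
    sum_const_zero, zero_add, add_lt_add_iff_right, Fin.val_fin_lt, ← sum_filter, sum_const,
    smul_eq_mul, descents, mul_comm]

end FillingsAndTowers

section Coefficients

open Classical in
lemma coeff_prod_X {ι σ R : Type*} [Fintype ι] [DecidableEq σ] [CommSemiring R]
    (f : ι → σ) (κ : σ →₀ ℕ) :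
    coeff κ (∏ i, X (f i) : MvPolynomial σ R) = if ∀ y, #{i | f i = y} = κ y then 1 else 0 := by
  have hprod : (∏ i, X (f i) : MvPolynomial σ R) = monomial (∑ i, Finsupp.single (f i) 1) 1 :=
    (monomial_sum_one _ _).symm
  rw [hprod, coeff_monomial]
  simp only [Finsupp.ext_iff, Finsupp.finsetSum_apply, Finsupp.single_apply, card_filter]

lemma card_filter_cons_eq_iff {ι α : Type*} [Fintype ι] [DecidableEq α] {m k c : ℕ} {w : ι → α}
    (hw : Function.Injective w) (h : Fin m → ι → α) {y : α}
    (hk : k = (if y ∈ univ.image w then 1 else 0) + c) :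
    #{x : Fin (m + 1) × ι | (Fin.cons w h : Fin (m + 1) → ι → α) x.1 x.2 = y} = k ↔
      #{x : Fin m × ι | h x.1 x.2 = y} = c := by
  have hfirst : (if y ∈ univ.image w then 1 else 0) = #{i | w i = y} := by
    rw [← card_filter_image hw (· = y), filter_eq', apply_ite card, card_singleton, card_empty]
  rw [hk, hfirst]
  simp only [card_filter, Fintype.sum_prod_type, Fin.sum_univ_succ, Fin.cons_zero, Fin.cons_succ,
    Nat.add_left_cancel_iff]

open Classical in
lemma cCoef_rect {p r m : ℕ} {a k : ℕ → ℕ} {w : Fin r → Fin (p + r)} (hw : Function.Injective w)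
    (ha : ∀ c : Fin r, a (p + 1 + c) = w c + 1) (κ : Fin (p + r) →₀ ℕ)
    (hk : ∀ y : Fin (p + r), k (y + 1) = (if y ∈ univ.image w then 1 else 0) + κ y) :
    cCoef (p + r) (rect p m) a k = coeff κ (towerGF Polynomial.X m (univ.image w)) := by
  have hcond (h : Fin m → Fin r → Fin (p + r)) :
      CCond (p + r) (rect p m) a k (ext (p + r) (rect p m) (rectFilling (Fin.cons w h))) ↔
        IsGreedyTower (Fin.cons w h : Fin (m + 1) → Fin r → Fin (p + r)) ∧
          ∀ y, #{x : Fin m × Fin r | h x.1 x.2 = y} = κ y := by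
    rw [cCond_rect_iff (ext_rectFilling _) hw ha, Fin.cons_zero, and_iff_right rfl]
    simp only [card_filter_cons_eq_iff hw h (hk _)]
  simp only [← sum_isGreedyTower _ _ hw, coeff_sum, coeff_smul, ← Fintype.prod_prod_type',
    coeff_prod_X, smul_eq_mul, mul_ite, mul_one, mul_zero, ← sum_filter, filter_filter]
  symm
  refine sum_nbij (fun h => rectFilling (Fin.cons w h)) (fun h hh => ?_) (fun h _ h' _ heq => ?_)
    (fun f hf => ?_) fun h _ => ?_
  · have hrange : rectFilling (Fin.cons w h : Fin (m + 1) → _) ∈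
        Fintype.piFinset fun _ => Icc 1 (p + r) :=
      Fintype.mem_piFinset.2 fun u => mem_Icc.2 (by simp only [rectFilling]; omega)
    exact mem_filter.2 ⟨hrange, (hcond h).2 (mem_filter.1 hh).2⟩
  · exact (Fin.cons_inj.1 (rectFilling_injective heq)).2
  · obtain ⟨hrange, hf⟩ := mem_filter.1 hf
    obtain ⟨g, rfl⟩ := exists_rectFilling_eq fun u => mem_Icc.1 (Fintype.mem_piFinset.1 hrange u)
    obtain rfl := ((cCond_rect_iff (ext_rectFilling g) hw ha).1 hf).1
    have hg := Fin.cons_self_tail g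
    rw [← hg] at hf
    exact ⟨Fin.tail g, mem_filter.2 ⟨mem_univ _, (hcond _).1 hf⟩, congrArg rectFilling hg⟩
  · rw [ascStat_rect (ext_rectFilling _)]

end Coefficients

section Rectangular

variable {p r : ℕ}

lemma cCoef_rect_top {m : ℕ} {k : ℕ → ℕ} {κ : Fin (p + r) →₀ ℕ} (hκ : ∀ y, κ y = k (y + 1)) :
    cCoef (p + r) (rect p m) (fun i => i) (fun i => if p + 1 ≤ i then k i + 1 else k i) =
      coeff κ (towerGF Polynomial.X m (topLetters p r)) := by
  rw [topLetters, map_eq_image]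
  refine cCoef_rect (Fin.natAddEmb p).injective (fun c => ?_) κ fun y => ?_
  · simp only [Fin.natAddEmb_apply, Fin.val_natAdd, Nat.add_right_comm]
  · rw [← map_eq_image, ← topLetters, hκ]
    simp only [mem_topLetters]
    split_ifs <;> omega

lemma cCoef_rect_bottom {m : ℕ} {k : ℕ → ℕ} {κ : Fin (p + r) →₀ ℕ} (hκ : ∀ y, κ y = k (y + 1)) :
    cCoef (p + r) (rect p m) (fun i => i - p) (fun i => if i ≤ r then k i + 1 else k i) =
      coeff κ (towerGF Polynomial.X m (bottomLetters p r)) := by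
  rw [bottomLetters, map_eq_image]
  refine cCoef_rect (Fin.castLEEmb (Nat.le_add_left r p)).injective (fun c => ?_) κ fun y => ?_
  · simp only [Fin.castLEEmb_apply, Fin.val_castLE]
    omega
  · rw [← map_eq_image, ← bottomLetters, hκ]
    simp only [mem_bottomLetters]
    split_ifs <;> omega

lemma sum_topLetters (k : ℕ → ℕ) :
    ∑ y ∈ topLetters p r, k (y + 1) = ∑ i ∈ Icc (p + 1) (p + r), k i := by
  rw [topLetters, sum_map, ← Ico_add_one_right_eq_Icc, sum_Ico_eq_sum_range,
    Nat.add_right_comm, Nat.add_sub_cancel_left, ← Fin.sum_univ_eq_sum_range]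
  simp only [Fin.natAddEmb_apply, Fin.val_natAdd, Nat.add_right_comm]

theorem X_pow_mul_cCoef_rect (p r m : ℕ) (k : ℕ → ℕ) :
    Polynomial.X ^ (∑ i ∈ Icc (p + 1) (p + r), k i) *
        cCoef (p + r) (rect p m) (fun i => i) (fun i => if p + 1 ≤ i then k i + 1 else k i) =
      Polynomial.X ^ (m * r) *
        cCoef (p + r) (rect p m) (fun i => i - p) (fun i => if i ≤ r then k i + 1 else k i) := by
  let κ : Fin (p + r) →₀ ℕ := Finsupp.equivFunOnFinite.symm fun y => k (y + 1)
  have hweight : (κ.prod fun y e => (if y ∈ topLetters p r then Polynomial.X else 1) ^ e) =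
      (Polynomial.X : Polynomial ℤ) ^ (∑ i ∈ Icc (p + 1) (p + r), k i) := by
    rw [Finsupp.prod_fintype _ _ fun _ => pow_zero _, ← sum_topLetters]
    simp only [ite_pow, one_pow, prod_ite_mem, univ_inter, prod_pow_eq_pow_sum, κ,
      Finsupp.equivFunOnFinite_symm_apply_apply]
  rw [cCoef_rect_top (κ := κ) fun _ => rfl, cCoef_rect_bottom (κ := κ) fun _ => rfl, ← hweight,
    ← coeff_rescale, rescale_towerGF_topLetters, coeff_smul, smul_eq_mul]

lemma toLaurent_eq_T_sub_mul {R : Type*} [CommRing R] {P Q : Polynomial R} {a b : ℕ}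
    (h : Polynomial.X ^ a * P = Polynomial.X ^ b * Q) :
    Polynomial.toLaurent P = LaurentPolynomial.T (b - a : ℤ) * Polynomial.toLaurent Q := by
  apply (LaurentPolynomial.isUnit_T (R := R) a).mul_left_cancel
  rw [← mul_assoc, ← LaurentPolynomial.T_add, add_sub_cancel, ← Polynomial.toLaurent_X_pow,
    ← Polynomial.toLaurent_X_pow, ← map_mul, ← map_mul, h]

end Rectangular

end CO

open CO in
/-- key step of Theorem `rectangular`. For the rectangular
composition `ρ = (0, …, 0, m+1, …, m+1)` with `r` parts equal to `m + 1`,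
`c^ρ_{(n-r+1,…,n)}(k₁,…,k_{n-r},k_{n-r+1}+1,…,k_n+1)` equals
`q^{rm-(k_{n-r+1}+⋯+k_n)} · c^ρ_{(1,…,r)}(k₁+1,…,k_r+1,k_{r+1},…,k_n)`,
as Laurent polynomials in `q`. -/
theorem c_rectangular (n : ℕ) (r : ℕ) (hr1 : 1 ≤ r) (hr2 : r ≤ n - 1)
    (m : ℕ) (hm : 1 ≤ m)
    (rho : ℕ → ℕ) (hrho : rho = fun i => if n - r + 1 ≤ i then m + 1 else 0)
    (k : ℕ → ℕ) :
    Polynomial.toLaurent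
        (cCoef n rho (fun j => j) fun i => if n - r + 1 ≤ i then k i + 1 else k i)
      = LaurentPolynomial.T
          ((r * m : ℤ) - ∑ j ∈ Finset.Icc (n - r + 1) n, (k j : ℤ)) *
        Polynomial.toLaurent
          (cCoef n rho (fun j => j - (n - r)) fun i => if i ≤ r then k i + 1 else k i) := by
  subst hrho
  obtain ⟨p, rfl⟩ : ∃ p, n = p + r := ⟨n - r, by omega⟩
  simp only [Nat.add_sub_cancel]
  have h := toLaurent_eq_T_sub_mul (X_pow_mul_cCoef_rect p r m k)
  rwa [Nat.cast_mul, mul_comm (m : ℤ), Nat.cast_sum] at h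
end

section
/- Let n ≥ 3, m₁ ≥ 0, m₂ ≥ 1, λ = (0, m₂, …, m₂, m₁+m₂) and λ⁺ = (0, m₂+1, …, m₂+1, m₁+m₂+1). Then for every 2 ≤ j ≤ n and every k ∈ ℤ_{≥0}^n: c^{λ⁺}_{j|1}(k_1+1, …, k_{j−1}+1, k_j, k_{j+1}+1, …, k_n+1) = Σ_{i=2}^{j} c^{λ}_{i|1}(k_1,…,k_n) + q^{m₂} · Σ_{i=j+1}^{n} c^{λ}_{i|1}(k_1,…,k_n) + c^{λ}_{1|2}(k_1,…,k_n). -/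
open Finset

namespace CO

/-- The bottom-row tuple defining `c^μ_{ã|b}` (for `s = n - 1`): entry `b` at
position `n`, and the elements of `{1, …, n} ∖ {ã, b}` in decreasing order at
positions `2, …, n - 1`. -/
def aTuple (n atil b : ℕ) : ℕ → ℕ :=
  fun j => if j = n then b
    else ((((Finset.Icc 1 n).erase atil).erase b).sort (· ≤ ·)).getD (n - 1 - j) 0

/-- The coefficient `c^μ_{ã|b}(k)`. -/
noncomputable def cBar (n : ℕ) (mu : ℕ → ℕ) (atil b : ℕ) (k : ℕ → ℕ) : Polynomial ℤ :=
  cCoef n mu (aTuple n atil b) k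

end CO

/-!
Read the second row of a counted filling from right to left. Once its *hole* `b`, the only value
in `{1, …, n}` missing from it, is chosen, the greedy rule forces the row: it copies the bottom
row, except that an entry equal to the value currently carried (initially `b`) is replaced by the
cyclically next value still available, which is carried on. A descent occurs exactly where the
carried value wraps around, and the final carried value is the hole of the bottom row. The
descents in the columns `2, …, n - 1`, all of which have weight `m₂`, therefore telescope to a
single comparison of the hole of the bottom row with the value carried past column `n`.

Deleting the bottom row thus writes a coefficient of `λ⁺` as a sum over `b` of coefficients of
`λ`. Deleting rows until only column `n` is left shows that a coefficient depends only on the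
hole and the last entry of the bottom row. When the hole is `j` and the last entry is `1`, a
choice `b ≠ 1` leaves the last entry unchanged and has a descent of weight `m₂` iff `j < b`,
while `b = 1` changes the last entry to `2` and has no descent.
-/

namespace CO

theorem sum_Ioc_pow_ite_mul {R : Type*} [CommSemiring R] {l j u : ℕ} (hlj : l ≤ j) (hju : j ≤ u)
    (x : R) (m : ℕ) (f : ℕ → R) :
    ∑ b ∈ Ioc l u, x ^ (if j < b then m else 0) * f b =
      ∑ b ∈ Ioc l j, f b + x ^ m * ∑ b ∈ Ioc j u, f b := by
  rw [← sum_Ioc_consecutive _ hlj hju, mul_sum]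
  refine congrArg₂ (· + ·) (sum_congr rfl fun b hb => ?_) (sum_congr rfl fun b hb => ?_)
  · rw [if_neg (mem_Ioc.mp hb).2.not_gt, pow_zero, one_mul]
  · rw [if_pos (mem_Ioc.mp hb).1]

section CyclicOrder

open Classical in
/-- The first element of `S` met when running through `ℕ` cyclically upwards from `d`: the least
element of `S` that is `≥ d`, or the least element of `S` if there is none. This is the choice made
by `GreedyRule`; it is meaningless for `S = ∅`. -/
noncomputable def cycFirst (d : ℕ) (S : Set ℕ) : ℕ :=
  if {x ∈ S | d ≤ x}.Nonempty then sInf {x ∈ S | d ≤ x} else sInf S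

variable {d x t : ℕ} {S : Set ℕ}

theorem eq_cycFirst_iff : t = cycFirst d S ↔
    ({x ∈ S | d ≤ x}.Nonempty → t = sInf {x ∈ S | d ≤ x}) ∧
      (¬{x ∈ S | d ≤ x}.Nonempty → t = sInf S) := by
  unfold cycFirst
  split_ifs with h <;> simp only [h, not_true, not_false_eq_true, true_implies, false_implies,
    and_true, true_and]

theorem cycFirst_mem (hS : S.Nonempty) : cycFirst d S ∈ S := by
  unfold cycFirst
  split_ifs with h
  · exact (Nat.sInf_mem h).1
  · exact Nat.sInf_mem hS

theorem le_cycFirst_or_forall_lt (d : ℕ) (S : Set ℕ) :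
    (d ≤ cycFirst d S ∧ ∀ x ∈ S, d ≤ x → cycFirst d S ≤ x) ∨
      (∀ x ∈ S, x < d) ∧ ∀ x ∈ S, cycFirst d S ≤ x := by
  unfold cycFirst
  split_ifs with h
  · exact .inl ⟨(Nat.sInf_mem h).2, fun x hx hdx => Nat.sInf_le ⟨hx, hdx⟩⟩
  · exact .inr ⟨fun x hx => not_le.mp fun hdx => h ⟨x, hx, hdx⟩, fun x hx => Nat.sInf_le hx⟩

theorem cycFirst_eq_of_le (ht : t ∈ S) (hd : d ≤ t) (hmin : ∀ x ∈ S, d ≤ x → t ≤ x) :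
    cycFirst d S = t := by
  have hmem := cycFirst_mem (d := d) ⟨t, ht⟩
  rcases le_cycFirst_or_forall_lt d S with ⟨hle, h⟩ | ⟨h, -⟩
  · exact (h t ht hd).antisymm (hmin _ hmem hle)
  · exact absurd (h t ht) hd.not_gt

theorem cycFirst_eq_of_forall_lt (ht : t ∈ S) (hlt : ∀ x ∈ S, x < d) (hmin : ∀ x ∈ S, t ≤ x) :
    cycFirst d S = t := by
  have hmem := cycFirst_mem (d := d) ⟨t, ht⟩
  rcases le_cycFirst_or_forall_lt d S with ⟨hle, -⟩ | ⟨-, h⟩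
  · exact absurd (hlt _ hmem) hle.not_gt
  · exact (h t ht).antisymm (hmin _ hmem)

theorem cycFirst_of_mem (hd : d ∈ S) : cycFirst d S = d :=
  cycFirst_eq_of_le hd le_rfl fun _ _ h => h

theorem cycFirst_singleton (d x : ℕ) : cycFirst d {x} = x :=
  cycFirst_mem (Set.singleton_nonempty x)

theorem cycFirst_insert_of_ne (hne : cycFirst d (insert x S) ≠ x) :
    cycFirst d (insert x S) = cycFirst d S := by
  have hmem : cycFirst d (insert x S) ∈ S :=
    (cycFirst_mem (Set.insert_nonempty x S)).resolve_left hne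
  rcases le_cycFirst_or_forall_lt d (insert x S) with ⟨hle, h⟩ | ⟨hlt, h⟩
  · exact (cycFirst_eq_of_le hmem hle fun y hy => h y (.inr hy)).symm
  · exact (cycFirst_eq_of_forall_lt hmem (fun y hy => hlt y (.inr hy))
      fun y hy => h y (.inr hy)).symm

theorem cycFirst_eq_of_insert (hS : S.Nonempty) (hx : cycFirst d (insert x S) = x) :
    cycFirst d S = cycFirst x S := by
  have hmem := cycFirst_mem (d := x) hS
  have hins := le_cycFirst_or_forall_lt d (insert x S)
  simp only [hx, Set.forall_mem_insert] at hins
  rcases hins with ⟨hle, -, h⟩ | ⟨⟨-, hlt⟩, -, h⟩ <;>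
    rcases le_cycFirst_or_forall_lt x S with ⟨hle', h'⟩ | ⟨hlt', h'⟩
  · exact cycFirst_eq_of_le hmem (hle.trans hle') fun y hy hdy => h' y hy (h y hy hdy)
  · exact cycFirst_eq_of_forall_lt hmem
      (fun y hy => not_le.mp fun hdy => (h y hy hdy).not_gt (hlt' y hy)) h'
  · exact cycFirst_eq_of_forall_lt hmem hlt fun y hy => h' y hy (h y hy)
  · exact cycFirst_eq_of_forall_lt hmem hlt h'

/-- Going cyclically from `x` to the next element of `S` passes the end of `ℕ` exactly when the
comparison with a fixed `y ∈ S` changes. -/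
theorem wrap_add_lt_cycFirst {y : ℕ} (hy : y ∈ S) (m : ℕ) :
    (if cycFirst x S < x then m else 0) + (if y < cycFirst x S then m else 0) =
      if y < x then m else 0 := by
  rcases le_cycFirst_or_forall_lt x S with ⟨hle, h⟩ | ⟨hlt, h⟩
  · have := h y hy
    split_ifs <;> omega
  · have := h y hy
    have := hlt y hy
    have := hlt _ (cycFirst_mem (d := x) ⟨y, hy⟩)
    split_ifs <;> omega

end CyclicOrder

section Rows

/-- `a` fills the columns `2, …, n` injectively with the elements of `{1, …, n}` other than the
*hole* `h`. -/
structure IsRow (n : ℕ) (a : ℕ → ℕ) (h : ℕ) : Prop where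
  hole_mem : h ∈ Set.Icc 1 n
  mapsTo : Set.MapsTo a (Set.Icc 2 n) (Set.Icc 1 n \ {h})
  injOn : Set.InjOn a (Set.Icc 2 n)

/-- The hole of a row together with its entries in the columns `2, …, i`. -/
def seen (a : ℕ → ℕ) (h i : ℕ) : Set ℕ := insert h (a '' Set.Icc 2 i)

/-- The value carried past column `i` when a greedy row with hole `b` is placed, from right to
left, on the row `a` with hole `h`. -/
noncomputable def carry (a : ℕ → ℕ) (h b i : ℕ) : ℕ := cycFirst b (seen a h i)

/-- The greedy row with hole `b` above the row `a` with hole `h`: each entry is copied, except that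
an entry equal to the carried value is replaced by the value carried on to the left. -/
noncomputable def nextRow (a : ℕ → ℕ) (h b i : ℕ) : ℕ :=
  if a i = carry a h b i then carry a h b (i - 1) else a i

/-- Two consecutive rows `a` (below) and `a'` (above), the upper one occupying the columns `C`,
satisfy the greedy rule and the non-attacking condition between each other. -/
structure IsGreedyStep_s14 (C : Finset ℕ) (a a' : ℕ → ℕ) : Prop where
  greedy : ∀ i ∈ C, a' i = cycFirst (a i) (a' '' {c | c ∈ C ∧ c ≤ i})
  ne : ∀ i ∈ C, ∀ c ∈ C, i < c → a' i ≠ a c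

variable {n : ℕ} {a a' a₂ : ℕ → ℕ} {h b i : ℕ}

theorem image_Icc_two_succ (a : ℕ → ℕ) (hi : 1 ≤ i) :
    a '' Set.Icc 2 (i + 1) = insert (a (i + 1)) (a '' Set.Icc 2 i) := by
  rw [← Set.image_insert_eq]
  congr 1
  ext c
  simp only [Set.mem_Icc, Set.mem_insert_iff]
  omega

theorem seen_one (a : ℕ → ℕ) (h : ℕ) : seen a h 1 = {h} := by simp [seen]

theorem seen_nonempty : (seen a h i).Nonempty := Set.insert_nonempty _ _

theorem seen_succ (hi : 1 ≤ i) : seen a h (i + 1) = insert (a (i + 1)) (seen a h i) := by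
  rw [seen, image_Icc_two_succ a hi, Set.insert_comm, seen]

theorem carry_mem : carry a h b i ∈ seen a h i := cycFirst_mem seen_nonempty

theorem carry_one (a : ℕ → ℕ) (h b : ℕ) : carry a h b 1 = h := by
  rw [carry, seen_one, cycFirst_singleton]

theorem carry_of_ne (hi : 1 ≤ i) (hne : a (i + 1) ≠ carry a h b (i + 1)) :
    carry a h b i = carry a h b (i + 1) := by
  rw [carry, seen_succ hi] at hne
  rw [carry, carry, seen_succ hi, cycFirst_insert_of_ne hne.symm]

theorem carry_of_eq (hi : 1 ≤ i) (he : a (i + 1) = carry a h b (i + 1)) :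
    carry a h b i = cycFirst (a (i + 1)) (seen a h i) := by
  rw [carry, seen_succ hi] at he
  exact cycFirst_eq_of_insert seen_nonempty he.symm

namespace IsRow

theorem exists_of_injOn (hmap : Set.MapsTo a (Set.Icc 2 n) (Set.Icc 1 n))
    (hinj : Set.InjOn a (Set.Icc 2 n)) (hn : 1 ≤ n) : ∃ h, IsRow n a h := by
  have hcard : ((Icc 2 n).image a).card < (Icc 1 n).card :=
    card_image_le.trans_lt (by simp only [Nat.card_Icc]; omega)
  obtain ⟨h, hh, hnot⟩ := exists_mem_notMem_of_card_lt_card hcard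
  simp only [mem_image, not_exists, not_and, mem_Icc] at hh hnot
  exact ⟨h, hh, fun i hi => ⟨hmap hi, hnot i hi⟩, hinj⟩

theorem congr (ha : IsRow n a h) (heq : Set.EqOn a a' (Set.Icc 2 n)) : IsRow n a' h :=
  ⟨ha.hole_mem, ha.mapsTo.congr heq, ha.injOn.congr heq⟩

theorem mapsTo_Icc (ha : IsRow n a h) : Set.MapsTo a (Set.Icc 2 n) (Set.Icc 1 n) :=
  ha.mapsTo.mono_right Set.sdiff_subset

theorem image_eq (ha : IsRow n a h) : a '' Set.Icc 2 n = Set.Icc 1 n \ {h} := by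
  refine Set.eq_of_subset_of_ncard_le ha.mapsTo.image_subset ?_ (Set.toFinite _)
  rw [ha.injOn.ncard_image, Set.ncard_sdiff_singleton_of_mem ha.hole_mem,
    ← coe_Icc, ← coe_Icc, Set.ncard_coe_finset, Set.ncard_coe_finset, Nat.card_Icc, Nat.card_Icc]
  omega

theorem hole_unique (ha : IsRow n a h) (ha' : IsRow n a b) : h = b := by
  have hh : h ∉ Set.Icc 1 n \ {b} := by
    rw [← ha'.image_eq, ha.image_eq]
    exact fun hm => hm.2 rfl
  by_contra hne
  exact hh ⟨ha.hole_mem, hne⟩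

theorem card_filter_eq (ha : IsRow n a h) {x : ℕ} (hx : x ∈ Set.Icc 1 n) :
    #{c ∈ Icc 2 n | a c = x} = if x = h then 0 else 1 := by
  split_ifs with hxh
  · rw [card_eq_zero, filter_eq_empty_iff]
    exact fun c hc he => (ha.mapsTo (mem_Icc.mp hc)).2 (he.trans hxh)
  · obtain ⟨c, hc, rfl⟩ : x ∈ a '' Set.Icc 2 n := ha.image_eq ▸ ⟨hx, hxh⟩
    rw [card_eq_one]
    refine ⟨c, Finset.ext fun d => ?_⟩
    rw [mem_filter, mem_Icc, mem_singleton]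
    exact ⟨fun hd => ha.injOn hd.1 hc hd.2, by rintro rfl; exact ⟨hc, rfl⟩⟩

theorem seen_last (ha : IsRow n a h) : seen a h n = Set.Icc 1 n := by
  rw [seen, ha.image_eq, Set.insert_sdiff_self_of_mem ha.hole_mem]

theorem notMem_seen (ha : IsRow n a h) {c : ℕ} (hic : i < c) (hc : c ∈ Set.Icc 2 n) :
    a c ∉ seen a h i := by
  rintro (he | ⟨d, hd, he⟩)
  · exact (ha.mapsTo hc).2 he
  · have := ha.injOn ⟨hd.1, hd.2.trans (hic.le.trans hc.2)⟩ hc he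
    exact absurd hd.2 (by omega)

theorem seen_sub_one (ha : IsRow n a h) (hn : 2 ≤ n) :
    seen a h (n - 1) = Set.Icc 1 n \ {a n} := by
  have hnot := ha.notMem_seen (Nat.sub_lt (by omega) one_pos) ⟨hn, le_rfl⟩
  have hsucc := seen_succ (a := a) (h := h) (i := n - 1) (by omega)
  rw [Nat.sub_add_cancel (by omega), ha.seen_last] at hsucc
  rw [hsucc, Set.insert_sdiff_self_of_notMem hnot]

theorem carry_last (ha : IsRow n a h) (hb : b ∈ Set.Icc 1 n) : carry a h b n = b := by
  rw [carry, ha.seen_last, cycFirst_of_mem hb]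

theorem carry_sub_one (ha : IsRow n a h) (hn : 2 ≤ n) :
    carry a h b (n - 1) = cycFirst b (Set.Icc 1 n \ {a n}) := by
  rw [carry, ha.seen_sub_one hn]

theorem nextRow_last (ha : IsRow n a h) (hb : b ∈ Set.Icc 1 n) (hn : 2 ≤ n) :
    nextRow a h b n = if a n = b then cycFirst b (Set.Icc 1 n \ {a n}) else a n := by
  rw [nextRow, ha.carry_last hb, ha.carry_sub_one hn]

theorem nextRow_image (ha : IsRow n a h) (hi : 1 ≤ i) (hin : i ≤ n) :
    nextRow a h b '' Set.Icc 2 i = seen a h i \ {carry a h b i} := by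
  induction i, hi using Nat.le_induction with
  | base => simp [seen_one, carry_one]
  | succ i hi ih =>
    have hnot := ha.notMem_seen (Nat.lt_succ_self i) ⟨by omega, hin⟩
    rw [image_Icc_two_succ _ hi, ih (by omega), nextRow, Nat.add_sub_cancel]
    split_ifs with he
    · rw [← he, seen_succ hi, Set.insert_sdiff_self_of_notMem hnot, Set.insert_sdiff_singleton,
        Set.insert_eq_of_mem carry_mem]
    · rw [carry_of_ne hi he, seen_succ hi, Set.insert_sdiff_singleton_comm he]

theorem nextRow_eq_cycFirst (ha : IsRow n a h) (hi : i ∈ Set.Icc 2 n) :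
    nextRow a h b i = cycFirst (a i) (seen a h i \ {carry a h b i}) := by
  obtain ⟨i, rfl⟩ : ∃ j, i = j + 1 := ⟨i - 1, by have := hi.1; omega⟩
  have hi1 : 1 ≤ i := by have := hi.1; omega
  rw [nextRow, Nat.add_sub_cancel, seen_succ hi1]
  split_ifs with he
  · rw [← he, Set.insert_sdiff_self_of_notMem (ha.notMem_seen (Nat.lt_succ_self i) hi),
      carry_of_eq hi1 he]
  · have hmem : a (i + 1) ∈ insert (a (i + 1)) (seen a h i) \ {carry a h b (i + 1)} :=
      ⟨Set.mem_insert _ _, he⟩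
    rw [cycFirst_of_mem hmem]

theorem nextRow_mem_seen (ha : IsRow n a h) (hi : i ∈ Set.Icc 2 n) :
    nextRow a h b i ∈ seen a h i := by
  have hmem : nextRow a h b i ∈ nextRow a h b '' Set.Icc 2 i := ⟨i, ⟨hi.1, le_rfl⟩, rfl⟩
  rw [ha.nextRow_image (one_le_two.trans hi.1) hi.2] at hmem
  exact hmem.1

theorem nextRow_notMem_image (ha : IsRow n a h) (hi : 1 ≤ i) (hin : i + 1 ≤ n) :
    nextRow a h b (i + 1) ∉ nextRow a h b '' Set.Icc 2 i := by
  rw [ha.nextRow_image hi (by omega), nextRow, Nat.add_sub_cancel]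
  split_ifs
  · exact fun hm => hm.2 rfl
  · exact fun hm => ha.notMem_seen (Nat.lt_succ_self i) ⟨by omega, hin⟩ hm.1

theorem isRow_nextRow (ha : IsRow n a h) (hb : b ∈ Set.Icc 1 n) : IsRow n (nextRow a h b) b := by
  have hne : ∀ i ∈ Set.Icc 2 n, ∀ c ∈ Set.Icc 2 n, i < c →
      nextRow a h b i ≠ nextRow a h b c := by
    rintro i ⟨hi, -⟩ c ⟨-, hc⟩ hic he
    obtain ⟨c, rfl⟩ : ∃ d, c = d + 1 := ⟨c - 1, by omega⟩
    exact ha.nextRow_notMem_image (by omega) hc ⟨i, ⟨hi, by omega⟩, he⟩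
  refine ⟨hb, fun i hi => ?_, fun i hi c hc he => ?_⟩
  · have himage := ha.nextRow_image (b := b) (hb.1.trans hb.2) le_rfl
    rw [ha.seen_last, ha.carry_last hb] at himage
    exact himage ▸ Set.mem_image_of_mem _ hi
  · by_contra hic
    rcases Nat.lt_or_gt_of_ne hic with hlt | hgt
    · exact hne i hi c hc hlt he
    · exact hne c hc i hi hgt he.symm

end IsRow

theorem setOf_mem_Icc_two_and_le (hi : i ≤ n) : {c | c ∈ Icc 2 n ∧ c ≤ i} = Set.Icc 2 i := by
  ext c
  simp only [mem_Icc, Set.mem_ofPred_eq, Set.mem_Icc]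
  omega

theorem IsRow.isGreedyStep_nextRow (ha : IsRow n a h) :
    IsGreedyStep_s14 (Icc 2 n) a (nextRow a h b) where
  greedy i hi := by
    rw [mem_Icc] at hi
    rw [setOf_mem_Icc_two_and_le hi.2, ha.nextRow_image (by omega) hi.2,
      ha.nextRow_eq_cycFirst hi]
  ne i hi c hc hic he := by
    rw [mem_Icc] at hi hc
    exact ha.notMem_seen hic hc (he ▸ ha.nextRow_mem_seen hi)

namespace IsGreedyStep_s14

theorem congr {C : Finset ℕ} (hs : IsGreedyStep_s14 C a a') {r r' : ℕ → ℕ} (ha : Set.EqOn a r C)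
    (ha' : Set.EqOn a' r' C) : IsGreedyStep_s14 C r r' where
  greedy i hi := by
    rw [← ha hi, ← ha' hi, ← Set.EqOn.image_eq fun c hc => ha' hc.1]
    exact hs.greedy i hi
  ne i hi c hc hic := by
    rw [← ha hc, ← ha' hi]
    exact hs.ne i hi c hc hic

theorem congr_left {C : Finset ℕ} {r : ℕ → ℕ} (heq : Set.EqOn a r C) :
    IsGreedyStep_s14 C a a' ↔ IsGreedyStep_s14 C r a' :=
  ⟨fun hs => hs.congr heq fun _ _ => rfl, fun hs => hs.congr heq.symm fun _ _ => rfl⟩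

/-- The set of all entries of a greedy row determines its last entry, and removing that entry leaves
the same situation one column shorter. -/
theorem image_Icc_eq (hs : IsGreedyStep_s14 (Icc 2 n) a a') (hs₂ : IsGreedyStep_s14 (Icc 2 n) a a₂)
    (ha' : IsRow n a' b) (ha₂ : IsRow n a₂ b) (hi : 1 ≤ i) (hin : i ≤ n) :
    a' '' Set.Icc 2 i = a₂ '' Set.Icc 2 i := by
  induction hin using Nat.decreasingInduction with
  | self => rw [ha'.image_eq, ha₂.image_eq]
  | of_succ i hin ih =>
    have ih := ih (by omega)
    have hmem : i + 1 ∈ Icc 2 n := mem_Icc.mpr ⟨by omega, hin⟩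
    have hnot : ∀ {r : ℕ → ℕ}, IsRow n r b → r (i + 1) ∉ r '' Set.Icc 2 i := fun hr hm =>
      hr.notMem_seen (Nat.lt_succ_self i) (mem_Icc.mp hmem) (.inr hm)
    have hlast : a' (i + 1) = a₂ (i + 1) := by
      rw [hs.greedy _ hmem, hs₂.greedy _ hmem, setOf_mem_Icc_two_and_le hin, ih]
    rw [image_Icc_two_succ a' hi, image_Icc_two_succ a₂ hi, hlast] at ih
    have hnot' := hnot ha'
    rw [hlast] at hnot'
    rw [← Set.insert_sdiff_self_of_notMem hnot', ih, Set.insert_sdiff_self_of_notMem (hnot ha₂)]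

theorem eqOn (hs : IsGreedyStep_s14 (Icc 2 n) a a') (hs₂ : IsGreedyStep_s14 (Icc 2 n) a a₂)
    (ha' : IsRow n a' b) (ha₂ : IsRow n a₂ b) : Set.EqOn a' a₂ (Set.Icc 2 n) := by
  intro i hi
  have hi1 : 1 ≤ i := le_trans one_le_two hi.1
  rw [hs.greedy i (mem_Icc.mpr hi), hs₂.greedy i (mem_Icc.mpr hi), setOf_mem_Icc_two_and_le hi.2,
    image_Icc_eq hs hs₂ ha' ha₂ hi1 hi.2]

end IsGreedyStep_s14

theorem sum_nextRow_descents (m : ℕ) (hi : 1 ≤ i) :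
    (∑ c ∈ Icc 2 i, if nextRow a h b c < a c then m else 0) =
      if h < carry a h b i then m else 0 := by
  induction i, hi using Nat.le_induction with
  | base => simp [carry_one]
  | succ i hi ih =>
    rw [sum_Icc_succ_top (by omega), ih, nextRow, Nat.add_sub_cancel]
    by_cases he : a (i + 1) = carry a h b (i + 1)
    · rw [if_pos he, ← he, carry_of_eq hi he, add_comm]
      exact wrap_add_lt_cycFirst (Set.mem_insert h _) m
    · rw [if_neg he, if_neg (lt_irrefl _), add_zero, carry_of_ne hi he]

end Rows

section Fillings

/-- The columns which have a box in the bottom row of the diagram of `μ`. -/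
def cols (n : ℕ) (μ : ℕ → ℕ) : Finset ℕ := {i ∈ Icc 1 n | 0 < μ i}

/-- The box directly above a box, inverse to `dbox`. -/
def upBox (u : ℕ × ℕ) : ℕ × ℕ := (u.1, u.2 + 1)

/-- The bottom row of a filling, as a function of the column. -/
def bottomRow (τ : ℕ × ℕ → ℕ) (i : ℕ) : ℕ := τ (i, 1)

/-- The filling of the diagram of `μ - 1` obtained by deleting the bottom row of a filling of the
diagram of `μ`. Fillings are extended by zero, hence the value on row `0`. -/
def dropRow (τ : ℕ × ℕ → ℕ) (u : ℕ × ℕ) : ℕ := if u.2 = 0 then 0 else τ (upBox u)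

/-- The filling obtained by inserting the entries of `a` in the columns `C` as a new bottom row. -/
def addRow (C : Finset ℕ) (a : ℕ → ℕ) (τ : ℕ × ℕ → ℕ) (u : ℕ × ℕ) : ℕ :=
  if u.2 = 1 then if u.1 ∈ C then a u.1 else 0 else τ (dbox u)

/-- The contribution to `ascStat` of the second row `a'` of a filling above its bottom row `a`,
where `ν` is the shape without the bottom row. -/
def stepAsc (n : ℕ) (ν a a' : ℕ → ℕ) : ℕ := ∑ i ∈ cols n ν, if a' i < a i then ν i else 0

open Classical in
/-- The fillings of the diagram of `μ` with entries in `{1, …, n}`, extended by zero. -/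
noncomputable def fillings (n : ℕ) (μ : ℕ → ℕ) : Finset (ℕ × ℕ → ℕ) :=
  (Fintype.piFinset fun _ : {u // u ∈ dgF n μ} => Icc 1 n).image (ext n μ)

variable {n i : ℕ} {μ ν a a' k K : ℕ → ℕ} {τ : ℕ × ℕ → ℕ} {u : ℕ × ℕ}

theorem mem_dgF : u ∈ dgF n μ ↔ u.1 ∈ Icc 1 n ∧ u.2 ∈ Icc 1 (μ u.1) := by
  obtain ⟨i, j⟩ := u
  simp only [dgF, mem_biUnion, mem_image, Prod.mk.injEq]
  exact ⟨by rintro ⟨_, hi, _, hj, rfl, rfl⟩; exact ⟨hi, hj⟩,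
    fun ⟨hi, hj⟩ => ⟨i, hi, j, hj, rfl, rfl⟩⟩

theorem mem_dgF_one : (i, 1) ∈ dgF n μ ↔ i ∈ cols n μ := by
  simp only [mem_dgF, cols, mem_filter, mem_Icc]
  omega

theorem upBox_mem_dgF (hu : 1 ≤ u.2) : upBox u ∈ dgF n μ ↔ u ∈ dgF n (μ - 1) := by
  simp only [mem_dgF, upBox, mem_Icc, Pi.sub_apply, Pi.one_apply]
  omega

theorem dbox_mem_dgF (hu : u.2 ≠ 1) : dbox u ∈ dgF n (μ - 1) ↔ u ∈ dgF n μ := by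
  simp only [mem_dgF, dbox, mem_Icc, Pi.sub_apply, Pi.one_apply]
  omega

theorem one_le_of_mem_dgF (hu : u ∈ dgF n μ) : 1 ≤ u.2 := (mem_Icc.mp (mem_dgF.mp hu).2).1

theorem dgF_eq_union :
    dgF n μ = (cols n μ).image (fun i => (i, 1)) ∪ (dgF n (μ - 1)).image upBox := by
  ext ⟨i, j⟩
  simp only [mem_union, mem_image, Prod.mk.injEq]
  constructor
  · intro hu
    have hj : 1 ≤ j := one_le_of_mem_dgF hu
    rcases hj.eq_or_lt with rfl | hj'
    · exact .inl ⟨i, mem_dgF_one.mp hu, rfl, rfl⟩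
    · obtain ⟨j, rfl⟩ : ∃ l, j = l + 1 := ⟨j - 1, by omega⟩
      exact .inr ⟨(i, j), (upBox_mem_dgF (u := (i, j)) (Nat.le_of_lt_succ hj')).mp hu, rfl⟩
  · rintro (⟨_, hi, rfl, rfl⟩ | ⟨u, hu, he⟩)
    · exact mem_dgF_one.mpr hi
    · exact he ▸ (upBox_mem_dgF (one_le_of_mem_dgF hu)).mpr hu

theorem forall_mem_dgF {P : ℕ × ℕ → Prop} : (∀ u ∈ dgF n μ, P u) ↔
    (∀ i ∈ cols n μ, P (i, 1)) ∧ ∀ u ∈ dgF n (μ - 1), P (upBox u) := by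
  rw [dgF_eq_union]
  simp only [forall_mem_union, forall_mem_image]

theorem sum_dgF (f : ℕ × ℕ → ℕ) :
    ∑ u ∈ dgF n μ, f u = ∑ i ∈ cols n μ, f (i, 1) + ∑ u ∈ dgF n (μ - 1), f (upBox u) := by
  have hdisj : Disjoint ((cols n μ).image fun i => (i, 1)) ((dgF n (μ - 1)).image upBox) := by
    simp only [disjoint_left, mem_image, not_exists, not_and]
    rintro _ ⟨i, -, rfl⟩ u hu he
    have h2 : u.2 + 1 = 1 := congrArg Prod.snd he
    have := one_le_of_mem_dgF hu
    omega
  rw [dgF_eq_union, sum_union hdisj, sum_image fun i _ c _ he => congrArg Prod.fst he,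
    sum_image fun u _ v _ he => ?_]
  simpa [upBox, Prod.ext_iff] using he

theorem dropRow_of_mem (hu : u ∈ dgF n μ) : dropRow τ u = τ (upBox u) :=
  if_neg (Nat.one_le_iff_ne_zero.mp (one_le_of_mem_dgF hu))

theorem dropRow_upBox (τ : ℕ × ℕ → ℕ) (u : ℕ × ℕ) : dropRow τ (upBox u) = τ (upBox (upBox u)) :=
  if_neg (Nat.succ_ne_zero _)

theorem card_filter_dgF (τ : ℕ × ℕ → ℕ) (x : ℕ) :
    #{u ∈ dgF n μ | τ u = x} =
      #{u ∈ dgF n (μ - 1) | dropRow τ u = x} + #{c ∈ cols n μ | bottomRow τ c = x} := by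
  simp only [card_filter]
  rw [sum_dgF, add_comm]
  exact congrArg₂ _ (sum_congr rfl fun u hu => by rw [dropRow_of_mem hu]) rfl

theorem Antidominant.sub_one (hμ : Antidominant n μ) : Antidominant n (μ - 1) :=
  fun i j hi hij hj => Nat.sub_le_sub_right (hμ i j hi hij hj) 1

theorem Antidominant.mem_cols (hμ : Antidominant n μ) {c : ℕ} (hi : i ∈ cols n μ)
    (hic : i ≤ c) (hc : c ≤ n) : c ∈ cols n μ := by
  simp only [cols, mem_filter, mem_Icc] at hi ⊢
  have := hμ i c hi.1.1 hic hc
  omega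

theorem cols_sub_one_subset : cols n (μ - 1) ⊆ cols n μ := by
  intro i
  simp only [cols, mem_filter, mem_Icc, Pi.sub_apply, Pi.one_apply]
  omega

theorem nonattacking_iff (hμ : Antidominant n μ) :
    (∀ u ∈ dgF n μ, ∀ v ∈ dgF n μ, Attack u v → τ u ≠ τ v) ↔
      Set.InjOn (bottomRow τ) (cols n μ) ∧
      (∀ i ∈ cols n (μ - 1), ∀ c ∈ cols n (μ - 1), i < c →
        bottomRow (dropRow τ) i ≠ bottomRow τ c) ∧
      ∀ u ∈ dgF n (μ - 1), ∀ v ∈ dgF n (μ - 1), Attack u v → dropRow τ u ≠ dropRow τ v := by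
  constructor
  · refine fun hτ => ⟨fun i hi c hc he => ?_, fun i hi c hc hic => ?_, fun u hu v hv huv => ?_⟩
    · by_contra hic
      exact hτ _ (mem_dgF_one.mpr hi) _ (mem_dgF_one.mpr hc) ⟨by simpa using hic, .inl rfl⟩ he
    · refine hτ (i, 2) ?_ (c, 1) (mem_dgF_one.mpr (cols_sub_one_subset hc))
        ⟨by simp, .inr (.inl ⟨rfl, hic⟩)⟩
      exact (upBox_mem_dgF (u := (i, 1)) le_rfl).mpr (mem_dgF_one.mpr hi)
    · rw [dropRow_of_mem hu, dropRow_of_mem hv]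
      refine hτ _ ((upBox_mem_dgF (one_le_of_mem_dgF hu)).mpr hu) _
        ((upBox_mem_dgF (one_le_of_mem_dgF hv)).mpr hv) ?_
      simpa [Attack, upBox, Prod.ext_iff] using huv
  · rintro ⟨hinj, hne, hτ⟩
    have hmixed : ∀ c ∈ cols n μ, ∀ u ∈ dgF n (μ - 1), u.2 = 1 → u.1 < c →
        τ (upBox u) ≠ τ (c, 1) := by
      rintro c hc ⟨i, j⟩ hu (rfl : j = 1) hic
      have hi := mem_dgF_one.mp hu
      exact hne i hi c (hμ.sub_one.mem_cols hi hic.le (mem_Icc.mp (mem_filter.mp hc).1).2) hic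
    refine forall_mem_dgF.mpr
      ⟨fun i hi => forall_mem_dgF.mpr ⟨fun c hc hic => ?_, fun v hv hiv => ?_⟩,
        fun u hu => forall_mem_dgF.mpr ⟨fun c hc huc => ?_, fun v hv huv => ?_⟩⟩
    · exact fun he => hic.1 (by rw [hinj hi hc he])
    · have := one_le_of_mem_dgF hv
      simp only [Attack, upBox] at hiv
      exact (hmixed i hi v hv (by omega) (by omega)).symm
    · have := one_le_of_mem_dgF hu
      simp only [Attack, upBox] at huc
      exact hmixed c hc u hu (by omega) (by omega)
    · rw [← dropRow_of_mem (τ := τ) hu, ← dropRow_of_mem (τ := τ) hv]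
      refine hτ u hu v hv ?_
      simpa [Attack, upBox, Prod.ext_iff] using huv

theorem mem_armF (hμ : Antidominant n μ) {v : ℕ × ℕ} (hu : u ∈ dgF n μ) :
    v ∈ armF n μ u ↔ v ∈ dgF n μ ∧ v.2 = u.2 ∧ v.1 < u.1 := by
  have hu1 := mem_Icc.mp (mem_dgF.mp hu).1
  refine ⟨fun hv => ?_, fun ⟨hv, hrow, hlt⟩ => ?_⟩
  · rcases mem_union.mp hv with hv | hv
    · obtain ⟨hv, hlt, hrow, -⟩ := mem_filter.mp hv
      exact ⟨hv, hrow, hlt⟩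
    · obtain ⟨hv, hlt, -, hμlt⟩ := mem_filter.mp hv
      have hvn : v.1 ≤ n := by
        rcases mem_union.mp hv with hv | hv
        · exact (mem_Icc.mp (mem_dgF.mp hv).1).2
        · obtain ⟨i, hi, rfl⟩ := mem_image.mp hv
          exact (mem_Icc.mp hi).2
      exact absurd (hμ u.1 v.1 hu1.1 hlt.le hvn) hμlt.not_ge
  · have hv1 := mem_Icc.mp (mem_dgF.mp hv).1
    exact mem_union_left _ (mem_filter.mpr ⟨hv, hlt, hrow, hμ v.1 u.1 hv1.1 hlt.le hu1.2⟩)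

theorem image_armF_union (hμ : Antidominant n μ) (hu : u ∈ dgF n (μ - 1)) :
    τ '' ↑(armF n μ (upBox u)) ∪ {τ (upBox u)} =
      (fun c => τ (c, u.2 + 1)) '' {c | (c, u.2) ∈ dgF n (μ - 1) ∧ c ≤ u.1} := by
  obtain ⟨i, j⟩ := u
  have hj : 1 ≤ j := one_le_of_mem_dgF hu
  have hmem : ∀ c, (c, j + 1) ∈ dgF n μ ↔ (c, j) ∈ dgF n (μ - 1) := fun c =>
    upBox_mem_dgF (u := (c, j)) hj
  have harm : ∀ v, v ∈ armF n μ (i, j + 1) ↔ v ∈ dgF n μ ∧ v.2 = j + 1 ∧ v.1 < i := fun v =>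
    mem_armF hμ ((hmem i).mpr hu)
  ext x
  constructor
  · rintro (⟨⟨c, _⟩, hv, rfl⟩ | rfl)
    · obtain ⟨hc, rfl, hci⟩ := (harm _).mp hv
      exact ⟨c, ⟨(hmem c).mp hc, hci.le⟩, rfl⟩
    · exact ⟨i, ⟨hu, le_rfl⟩, rfl⟩
  · rintro ⟨c, ⟨hc, hci⟩, rfl⟩
    rcases hci.eq_or_lt with rfl | hci
    · exact .inr rfl
    · exact .inl ⟨_, (harm _).mpr ⟨(hmem c).mpr hc, rfl, hci⟩, rfl⟩

theorem greedyRule_iff (hμ : Antidominant n μ) :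
    GreedyRule n μ τ ↔ ∀ u ∈ dgF n (μ - 1), τ (upBox u) =
      cycFirst (τ u) ((fun c => τ (c, u.2 + 1)) '' {c | (c, u.2) ∈ dgF n (μ - 1) ∧ c ≤ u.1}) := by
  rw [GreedyRule, forall_mem_dgF]
  refine (and_iff_right fun i _ hi => absurd hi (by simp)).trans
    (forall₂_congr fun u hu => ?_)
  have hup : 2 ≤ (upBox u).2 := Nat.succ_le_succ (one_le_of_mem_dgF hu)
  rw [forall_prop_of_true hup, image_armF_union hμ hu]
  exact eq_cycFirst_iff.symm

theorem greedyRule_iff_dropRow (hμ : Antidominant n μ) :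
    GreedyRule n μ τ ↔ GreedyRule n (μ - 1) (dropRow τ) ∧
      ∀ i ∈ cols n (μ - 1), bottomRow (dropRow τ) i =
        cycFirst (bottomRow τ i) (bottomRow (dropRow τ) '' {c | c ∈ cols n (μ - 1) ∧ c ≤ i}) := by
  rw [greedyRule_iff hμ, greedyRule_iff hμ.sub_one, forall_mem_dgF, and_comm]
  refine and_congr (forall₂_congr fun u hu => ?_) (forall₂_congr fun i _ => ?_)
  · have hmem : ∀ c, (c, u.2 + 1) ∈ dgF n (μ - 1) ↔ (c, u.2) ∈ dgF n (μ - 1 - 1) := fun c =>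
      upBox_mem_dgF (u := (c, u.2)) (one_le_of_mem_dgF (u := u) hu)
    rw [dropRow_of_mem hu]
    simp only [upBox, hmem, dropRow, Nat.add_eq_zero_iff, one_ne_zero, and_false, if_false]
  · simp only [mem_dgF_one]
    rfl

theorem ascStat_eq_sum : ascStat n μ τ =
    ∑ u ∈ dgF n (μ - 1), if τ (upBox u) < τ u then μ u.1 - u.2 else 0 := by
  rw [ascStat, sum_filter, sum_dgF, sum_eq_zero, zero_add]
  · refine sum_congr rfl fun u hu => ?_
    have hu' := mem_dgF.mp hu
    simp only [mem_Icc, Pi.sub_apply, Pi.one_apply] at hu'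
    have hleg : μ u.1 - (u.2 + 1) + 1 = μ u.1 - u.2 := by omega
    exact if_congr (and_iff_right (Nat.succ_le_succ hu'.2.1)) hleg rfl
  · intro i _
    simp

theorem ascStat_eq_add_stepAsc : ascStat n μ τ =
    ascStat n (μ - 1) (dropRow τ) + stepAsc n (μ - 1) (bottomRow τ) (bottomRow (dropRow τ)) := by
  rw [ascStat_eq_sum, sum_dgF, ascStat_eq_sum, add_comm]
  refine congrArg₂ _ (sum_congr rfl fun u hu => ?_) rfl
  rw [dropRow_of_mem hu, dropRow_upBox]
  refine if_congr Iff.rfl ?_ rfl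
  rw [Pi.sub_apply, Pi.one_apply, Nat.sub_sub, add_comm 1]
  rfl

theorem CCond.eqOn (hτ : CCond n μ a k τ) : Set.EqOn (bottomRow τ) a (cols n μ) :=
  fun i hi => hτ.2.1 i (mem_dgF_one.mpr hi)

theorem CCond.congr (hτ : CCond n μ a k τ) (heq : Set.EqOn a a' (cols n μ)) :
    CCond n μ a' k τ :=
  ⟨hτ.1, fun i hi => (hτ.2.1 i hi).trans (heq (mem_dgF_one.mp hi)), hτ.2.2⟩

theorem card_filter_cols_congr (heq : Set.EqOn a a' (cols n μ)) (x : ℕ) :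
    #{c ∈ cols n μ | a c = x} = #{c ∈ cols n μ | a' c = x} := by
  rw [filter_congr fun c hc => by rw [heq hc]]

theorem CCond.card_filter_le (hτ : CCond n μ a K τ) {x : ℕ} (hx : x ∈ Icc 1 n) :
    #{c ∈ cols n μ | a c = x} ≤ K x := by
  rw [← hτ.2.2.2.2 x (mem_Icc.mp hx).1 (mem_Icc.mp hx).2, card_filter_dgF,
    card_filter_cols_congr hτ.eqOn]
  exact Nat.le_add_left _ _

theorem cCond_iff (hμ : Antidominant n μ) (hmaps : Set.MapsTo a (cols n μ) (Set.Icc 1 n))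
    (hinj : Set.InjOn a (cols n μ))
    (hK : ∀ x ∈ Icc 1 n, K x = k x + #{c ∈ cols n μ | a c = x}) :
    CCond n μ a K τ ↔ Set.EqOn (bottomRow τ) a (cols n μ) ∧
      CCond n (μ - 1) (bottomRow (dropRow τ)) k (dropRow τ) ∧
      IsGreedyStep_s14 (cols n (μ - 1)) a (bottomRow (dropRow τ)) := by
  have hsub : (cols n (μ - 1) : Set ℕ) ⊆ cols n μ := coe_subset.mpr cols_sub_one_subset
  have hrange : (∀ u ∈ dgF n μ, 1 ≤ τ u ∧ τ u ≤ n) ↔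
      (∀ i ∈ cols n μ, 1 ≤ bottomRow τ i ∧ bottomRow τ i ≤ n) ∧
        ∀ u ∈ dgF n (μ - 1), 1 ≤ dropRow τ u ∧ dropRow τ u ≤ n := by
    rw [forall_mem_dgF]
    exact and_congr Iff.rfl (forall₂_congr fun u hu => by rw [dropRow_of_mem hu])
  have hbottom : (∀ i, (i, 1) ∈ dgF n μ → τ (i, 1) = a i) ↔
      Set.EqOn (bottomRow τ) a (cols n μ) := by
    simp only [mem_dgF_one]
    rfl
  rw [CCond, CCond, hrange, hbottom, nonattacking_iff hμ, greedyRule_iff_dropRow hμ]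
  constructor
  · rintro ⟨⟨-, hrange⟩, heq, ⟨-, hne, hattack⟩, ⟨hgreedy, hstep⟩, hcontent⟩
    refine ⟨heq, ⟨hrange, fun _ _ => rfl, hattack, hgreedy, fun x hx1 hxn => ?_⟩,
      (IsGreedyStep_s14.congr_left (heq.mono hsub)).mp ⟨hstep, hne⟩⟩
    have hx := hcontent x hx1 hxn
    rwa [card_filter_dgF, hK x (mem_Icc.mpr ⟨hx1, hxn⟩), card_filter_cols_congr heq,
      Nat.add_right_cancel_iff] at hx
  · rintro ⟨heq, ⟨hrange, -, hattack, hgreedy, hcontent⟩, hs⟩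
    obtain ⟨hstep, hne⟩ := (IsGreedyStep_s14.congr_left (heq.mono hsub)).mpr hs
    refine ⟨⟨fun i hi => heq hi ▸ hmaps hi, hrange⟩, heq, ⟨hinj.congr heq.symm, hne, hattack⟩,
      ⟨hgreedy, hstep⟩, fun x hx1 hxn => ?_⟩
    rw [card_filter_dgF, hK x (mem_Icc.mpr ⟨hx1, hxn⟩), card_filter_cols_congr heq,
      hcontent x hx1 hxn]

theorem mem_fillings : τ ∈ fillings n μ ↔
    (∀ u ∈ dgF n μ, τ u ∈ Icc 1 n) ∧ ∀ u ∉ dgF n μ, τ u = 0 := by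
  simp only [fillings, mem_image, Fintype.mem_piFinset]
  constructor
  · rintro ⟨f, hf, rfl⟩
    exact ⟨fun u hu => by simpa only [ext, dif_pos hu] using hf ⟨u, hu⟩,
      fun u hu => by simp only [ext, dif_neg hu]⟩
  · refine fun ⟨hin, hout⟩ => ⟨fun u => τ u, fun u => hin u u.2, funext fun u => ?_⟩
    by_cases hu : u ∈ dgF n μ
    · simp only [ext, dif_pos hu]
    · simp only [ext, dif_neg hu, hout u hu]

open Classical in
theorem cCoef_eq_sum : cCoef n μ a k =
    ∑ τ ∈ fillings n μ with CCond n μ a k τ, Polynomial.X ^ ascStat n μ τ := by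
  have hinj : Function.Injective (ext n μ) := fun f g hfg => funext fun u => by
    simpa only [ext, dif_pos u.2] using congrFun hfg u
  rw [fillings, filter_image, sum_image hinj.injOn]
  rfl

theorem apply_eq_zero (hτ : τ ∈ fillings n μ) (hu : u.2 = 0) : τ u = 0 :=
  (mem_fillings.mp hτ).2 u fun hmem => hu.not_gt (one_le_of_mem_dgF hmem)

theorem dropRow_mem_fillings (hτ : τ ∈ fillings n μ) : dropRow τ ∈ fillings n (μ - 1) := by
  obtain ⟨hin, hout⟩ := mem_fillings.mp hτ
  refine mem_fillings.mpr ⟨fun u hu => ?_, fun u hu => ?_⟩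
  · rw [dropRow_of_mem hu]
    exact hin _ ((upBox_mem_dgF (one_le_of_mem_dgF hu)).mpr hu)
  · rw [dropRow]
    split_ifs with hrow
    · rfl
    · exact hout _ fun hmem => hu ((upBox_mem_dgF (Nat.one_le_iff_ne_zero.mpr hrow)).mp hmem)

theorem addRow_upBox {C : Finset ℕ} (hu : u.2 ≠ 0) : addRow C a τ (upBox u) = τ u :=
  if_neg fun he => hu (Nat.succ_injective he)

theorem bottomRow_addRow {C : Finset ℕ} : Set.EqOn (bottomRow (addRow C a τ)) a C :=
  fun _ hi => if_pos hi

theorem addRow_mem_fillings (hmaps : Set.MapsTo a (cols n μ) (Set.Icc 1 n))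
    (hτ : τ ∈ fillings n (μ - 1)) : addRow (cols n μ) a τ ∈ fillings n μ := by
  obtain ⟨hin, hout⟩ := mem_fillings.mp hτ
  refine mem_fillings.mpr ⟨forall_mem_dgF.mpr ⟨fun i hi => ?_, fun u hu => ?_⟩, fun u hu => ?_⟩
  · have hbottom : addRow (cols n μ) a τ (i, 1) = a i := bottomRow_addRow hi
    exact hbottom ▸ mem_Icc.mpr (hmaps hi)
  · rw [addRow_upBox (Nat.one_le_iff_ne_zero.mp (one_le_of_mem_dgF hu))]
    exact hin u hu
  · obtain ⟨i, j⟩ := u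
    rw [addRow]
    split_ifs with hrow hi
    · exact absurd (mem_dgF_one.mpr hi) (hrow ▸ hu)
    · rfl
    · exact hout _ fun hmem => hu ((dbox_mem_dgF hrow).mp hmem)

theorem addRow_dropRow (hτ : τ ∈ fillings n μ) (heq : Set.EqOn (bottomRow τ) a (cols n μ)) :
    addRow (cols n μ) a (dropRow τ) = τ := by
  funext ⟨i, j⟩
  rcases j with _ | _ | j
  · exact (apply_eq_zero hτ rfl).symm
  · by_cases hi : i ∈ cols n μ
    · exact (if_pos hi).trans (heq hi).symm
    · exact (if_neg hi).trans ((mem_fillings.mp hτ).2 _ (mt mem_dgF_one.mp hi)).symm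
  · rfl

theorem dropRow_addRow {C : Finset ℕ} (hτ : τ ∈ fillings n ν) :
    dropRow (addRow C a τ) = τ := by
  funext u
  rw [dropRow]
  split_ifs with hrow
  · exact (apply_eq_zero hτ hrow).symm
  · exact addRow_upBox hrow

theorem stepAsc_congr {r r' : ℕ → ℕ} (ha : Set.EqOn a r (cols n ν))
    (ha' : Set.EqOn a' r' (cols n ν)) : stepAsc n ν a a' = stepAsc n ν r r' :=
  sum_congr rfl fun i hi => by rw [ha hi, ha' hi]

open Classical in
theorem cCoef_eq_sum_dropRow (hμ : Antidominant n μ)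
    (hmaps : Set.MapsTo a (cols n μ) (Set.Icc 1 n)) (hinj : Set.InjOn a (cols n μ))
    (hK : ∀ x ∈ Icc 1 n, K x = k x + #{c ∈ cols n μ | a c = x}) :
    cCoef n μ a K =
      ∑ τ ∈ fillings n (μ - 1) with CCond n (μ - 1) (bottomRow τ) k τ ∧
          IsGreedyStep_s14 (cols n (μ - 1)) a (bottomRow τ),
        Polynomial.X ^ (ascStat n (μ - 1) τ + stepAsc n (μ - 1) a (bottomRow τ)) := by
  have hsub : (cols n (μ - 1) : Set ℕ) ⊆ cols n μ := coe_subset.mpr cols_sub_one_subset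
  rw [cCoef_eq_sum]
  refine sum_nbij' dropRow (addRow (cols n μ) a) ?_ ?_ ?_ ?_ ?_ <;>
    simp only [mem_filter, cCond_iff hμ hmaps hinj hK]
  · exact fun τ ⟨hτ, _, hc⟩ => ⟨dropRow_mem_fillings hτ, hc⟩
  · exact fun τ ⟨hτ, hc⟩ =>
      ⟨addRow_mem_fillings hmaps hτ, bottomRow_addRow, by rwa [dropRow_addRow hτ]⟩
  · exact fun τ ⟨hτ, heq, _⟩ => addRow_dropRow hτ heq
  · exact fun τ ⟨hτ, _⟩ => dropRow_addRow hτ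
  · rintro τ ⟨-, heq, -⟩
    rw [ascStat_eq_add_stepAsc, stepAsc_congr (heq.mono hsub) (Set.eqOn_refl _ _)]

theorem exists_eq_add_or_cCoef_eq_zero (n : ℕ) (μ K c : ℕ → ℕ) :
    (∃ k : ℕ → ℕ, ∀ x ∈ Icc 1 n, K x = k x + c x) ∨
      ∀ a, (∀ x ∈ Icc 1 n, #{i ∈ cols n μ | a i = x} = c x) → cCoef n μ a K = 0 := by
  classical
  by_cases hle : ∀ x ∈ Icc 1 n, c x ≤ K x
  · exact .inl ⟨K - c, fun x hx => (Nat.sub_add_cancel (hle x hx)).symm⟩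
  · push Not at hle
    obtain ⟨x, hx, hlt⟩ := hle
    refine .inr fun a ha => ?_
    rw [cCoef_eq_sum]
    refine sum_eq_zero fun τ hτ => ?_
    have hcard := (mem_filter.mp hτ).2.card_filter_le hx
    exact absurd (ha x hx ▸ hcard) hlt.not_ge

theorem cCoef_congr (hμ : Antidominant n μ)
    (hmaps : Set.MapsTo a (cols n μ) (Set.Icc 1 n)) (hinj : Set.InjOn a (cols n μ))
    (hmaps' : Set.MapsTo a' (cols n μ) (Set.Icc 1 n)) (hinj' : Set.InjOn a' (cols n μ))
    (hcard : ∀ x ∈ Icc 1 n, #{c ∈ cols n μ | a' c = x} = #{c ∈ cols n μ | a c = x})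
    (heq : Set.EqOn a a' (cols n (μ - 1))) :
    cCoef n μ a K = cCoef n μ a' K := by
  classical
  rcases exists_eq_add_or_cCoef_eq_zero n μ K fun x => #{c ∈ cols n μ | a c = x} with
    ⟨k, hK⟩ | hzero
  · rw [cCoef_eq_sum_dropRow hμ hmaps hinj hK,
      cCoef_eq_sum_dropRow hμ hmaps' hinj' fun x hx => hcard x hx ▸ hK x hx]
    simp only [IsGreedyStep_s14.congr_left heq, stepAsc_congr heq (Set.eqOn_refl _ _)]
  · rw [hzero a fun _ _ => rfl, hzero a' hcard]

end Fillings

section Peeling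

variable {n h : ℕ} {μ a k K : ℕ → ℕ} {τ : ℕ × ℕ → ℕ}

theorem CCond.exists_isRow (hτ : CCond n μ a k τ) (hcols : cols n μ = Icc 2 n) (hn : 1 ≤ n) :
    ∃ b, IsRow n a b := by
  have heq := hτ.eqOn
  have hbox : ∀ {i}, i ∈ Set.Icc 2 n → (i, 1) ∈ dgF n μ := fun hi =>
    mem_dgF_one.mpr (hcols ▸ mem_Icc.mpr hi)
  rw [hcols, coe_Icc] at heq
  refine IsRow.exists_of_injOn (fun i hi => heq hi ▸ hτ.1 _ (hbox hi)) (fun i hi c hc he => ?_) hn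
  by_contra hic
  rw [← heq hi, ← heq hc] at he
  exact hτ.2.2.1 _ (hbox hi) _ (hbox hc) ⟨by simpa using hic, .inl rfl⟩ he

theorem cCond_and_isGreedyStep_iff (hcols : cols n μ = Icc 2 n) (ha : IsRow n a h) :
    CCond n μ (bottomRow τ) k τ ∧ IsGreedyStep_s14 (Icc 2 n) a (bottomRow τ) ↔
      ∃ b ∈ Icc 1 n, CCond n μ (nextRow a h b) k τ := by
  have hn : 1 ≤ n := ha.hole_mem.1.trans ha.hole_mem.2
  constructor
  · rintro ⟨hτ, hs⟩
    obtain ⟨b, hb⟩ := hτ.exists_isRow hcols hn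
    refine ⟨b, mem_Icc.mpr hb.hole_mem, hτ.congr ?_⟩
    rw [hcols, coe_Icc]
    exact hs.eqOn ha.isGreedyStep_nextRow hb (ha.isRow_nextRow hb.hole_mem)
  · rintro ⟨b, -, hτ⟩
    have heq := hτ.eqOn.symm
    refine ⟨hτ.congr heq, ha.isGreedyStep_nextRow.congr (fun _ _ => rfl) (hcols ▸ heq)⟩

theorem cCoef_eq_sum_nextRow (hμ : Antidominant n μ) (hcols : cols n μ = Icc 2 n)
    (hcols' : cols n (μ - 1) = Icc 2 n) (ha : IsRow n a h)
    (hK : ∀ x ∈ Icc 1 n, K x = k x + if x = h then 0 else 1) :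
    cCoef n μ a K = ∑ b ∈ Icc 1 n, Polynomial.X ^ stepAsc n (μ - 1) a (nextRow a h b) *
      cCoef n (μ - 1) (nextRow a h b) k := by
  classical
  have hK' : ∀ x ∈ Icc 1 n, K x = k x + #{c ∈ cols n μ | a c = x} := fun x hx => by
    rw [hK x hx, hcols, ha.card_filter_eq (mem_Icc.mp hx)]
  have hfilter : {τ ∈ fillings n (μ - 1) | CCond n (μ - 1) (bottomRow τ) k τ ∧
      IsGreedyStep_s14 (cols n (μ - 1)) a (bottomRow τ)} =
      (Icc 1 n).biUnion fun b =>
        {τ ∈ fillings n (μ - 1) | CCond n (μ - 1) (nextRow a h b) k τ} := by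
    ext τ
    rw [hcols', mem_filter, cCond_and_isGreedyStep_iff hcols' ha]
    simp only [mem_biUnion, mem_filter]
    exact ⟨fun ⟨hτ, b, hb, hc⟩ => ⟨b, hb, hτ, hc⟩, fun ⟨b, hb, hτ, hc⟩ => ⟨hτ, b, hb, hc⟩⟩
  have hdisj : (Icc 1 n : Set ℕ).PairwiseDisjoint fun b =>
      {τ ∈ fillings n (μ - 1) | CCond n (μ - 1) (nextRow a h b) k τ} := by
    intro b hb c hc hbc
    refine disjoint_left.mpr fun τ hτb hτc => hbc ?_
    have heq := (mem_filter.mp hτb).2.eqOn.symm.trans (mem_filter.mp hτc).2.eqOn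
    rw [hcols', coe_Icc] at heq
    rw [coe_Icc] at hb hc
    exact ((ha.isRow_nextRow hb).congr heq).hole_unique (ha.isRow_nextRow hc)
  have hcoe : (cols n μ : Set ℕ) = Set.Icc 2 n := by rw [hcols, coe_Icc]
  rw [cCoef_eq_sum_dropRow hμ (hcoe ▸ ha.mapsTo_Icc) (hcoe ▸ ha.injOn) hK', hfilter,
    sum_biUnion hdisj]
  refine sum_congr rfl fun b _ => ?_
  rw [cCoef_eq_sum, mul_sum]
  refine sum_congr rfl fun τ hτ => ?_
  rw [add_comm, pow_add, stepAsc_congr (Set.eqOn_refl a _) (mem_filter.mp hτ).2.eqOn]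

end Peeling

section AlmostRectangle

/-- The composition `(0, m, …, m, m₁ + m)` with `n` parts. -/
def almostRect (n m₁ m : ℕ) (i : ℕ) : ℕ := if i = n then m₁ + m else if 2 ≤ i then m else 0

variable {n m₁ m h b : ℕ} {a a' k K : ℕ → ℕ}

theorem almostRect_succ_sub_one : almostRect n m₁ (m + 1) - 1 = almostRect n m₁ m := by
  funext i
  simp only [almostRect, Pi.sub_apply, Pi.one_apply]
  split_ifs <;> omega

theorem antidominant_almostRect : Antidominant n (almostRect n m₁ m) := by
  intro i j _ hij hj
  simp only [almostRect]
  split_ifs <;> omega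

theorem cols_almostRect (hn : 2 ≤ n) (hm : 1 ≤ m) : cols n (almostRect n m₁ m) = Icc 2 n := by
  ext i
  simp only [cols, mem_filter, mem_Icc]
  rw [almostRect]
  split_ifs <;> omega

theorem cols_almostRect_zero_subset : cols n (almostRect n m₁ 0) ⊆ {n} := by
  intro i
  simp only [cols, mem_filter, mem_Icc, mem_singleton]
  rw [almostRect]
  split_ifs <;> omega

theorem stepAsc_almostRect (hn : 2 ≤ n) (hm : 1 ≤ m) :
    stepAsc n (almostRect n m₁ m) a (nextRow a h b) =
      (if h < carry a h b (n - 1) then m else 0) +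
        if nextRow a h b n < a n then m₁ + m else 0 := by
  obtain ⟨n, rfl⟩ : ∃ p, n = p + 1 := ⟨n - 1, by omega⟩
  rw [stepAsc, cols_almostRect hn hm, sum_Icc_succ_top hn, Nat.add_sub_cancel,
    ← sum_nextRow_descents m (Nat.le_of_succ_le_succ hn)]
  refine congrArg₂ (· + ·) (sum_congr rfl fun i hi => ?_) (if_congr Iff.rfl (if_pos rfl) rfl)
  obtain ⟨hi2, hin⟩ := mem_Icc.mp hi
  have hval : almostRect (n + 1) m₁ m i = m := (if_neg (by omega)).trans (if_pos hi2)
  rw [hval]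

theorem cCoef_almostRect_succ (hn : 2 ≤ n) (hm : 1 ≤ m) (ha : IsRow n a h)
    (hK : ∀ x ∈ Icc 1 n, K x = k x + if x = h then 0 else 1) :
    cCoef n (almostRect n m₁ (m + 1)) a K =
      ∑ b ∈ Icc 1 n, Polynomial.X ^ stepAsc n (almostRect n m₁ m) a (nextRow a h b) *
        cCoef n (almostRect n m₁ m) (nextRow a h b) k := by
  have hsub : almostRect n m₁ (m + 1) - 1 = almostRect n m₁ m :=
    almostRect_succ_sub_one
  have hcols : cols n (almostRect n m₁ (m + 1) - 1) = Icc 2 n := by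
    rw [hsub, cols_almostRect hn hm]
  rw [cCoef_eq_sum_nextRow antidominant_almostRect (cols_almostRect hn (by omega)) hcols ha hK,
    hsub]

theorem cCoef_almostRect_congr (hn : 2 ≤ n) (hm : 1 ≤ m) (ha : IsRow n a h) (ha' : IsRow n a' h)
    (hlast : a n = a' n) :
    cCoef n (almostRect n m₁ m) a K = cCoef n (almostRect n m₁ m) a' K := by
  have hcard {m h a} (hm : 1 ≤ m) (ha : IsRow n a h) : ∀ x ∈ Icc 1 n,
      #{c ∈ cols n (almostRect n m₁ m) | a c = x} = if x = h then 0 else 1 := fun x hx => by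
    rw [cols_almostRect hn hm, ha.card_filter_eq (mem_Icc.mp hx)]
  induction m, hm using Nat.le_induction generalizing a a' h K with
  | base =>
    have hcoe : (cols n (almostRect n m₁ 1) : Set ℕ) = Set.Icc 2 n := by
      rw [cols_almostRect hn le_rfl, coe_Icc]
    refine cCoef_congr antidominant_almostRect (hcoe ▸ ha.mapsTo_Icc) (hcoe ▸ ha.injOn)
      (hcoe ▸ ha'.mapsTo_Icc) (hcoe ▸ ha'.injOn) (fun x hx => ?_) fun i hi => ?_
    · rw [hcard le_rfl ha x hx, hcard le_rfl ha' x hx]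
    · rw [almostRect_succ_sub_one] at hi
      rwa [mem_singleton.mp (cols_almostRect_zero_subset hi)]
  | succ m hm ih =>
    rcases exists_eq_add_or_cCoef_eq_zero n (almostRect n m₁ (m + 1)) K
      fun x => if x = h then 0 else 1 with ⟨k, hK⟩ | hzero
    · rw [cCoef_almostRect_succ hn hm ha hK, cCoef_almostRect_succ hn hm ha' hK]
      refine sum_congr rfl fun b hb => ?_
      have hb : b ∈ Set.Icc 1 n := mem_Icc.mp hb
      have hcarry : carry a h b (n - 1) = carry a' h b (n - 1) := by
        rw [ha.carry_sub_one hn, ha'.carry_sub_one hn, hlast]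
      have hlast' : nextRow a h b n = nextRow a' h b n := by
        rw [ha.nextRow_last hb hn, ha'.nextRow_last hb hn, hlast]
      rw [stepAsc_almostRect hn hm, stepAsc_almostRect hn hm, hcarry, hlast', hlast,
        ih (ha.isRow_nextRow hb) (ha'.isRow_nextRow hb) hlast']
    · rw [hzero a (hcard (by omega) ha), hzero a' (hcard (by omega) ha')]

end AlmostRectangle

section Tuples

variable {n m₁ m x b h i : ℕ} {a k : ℕ → ℕ}

/-- The values of `aTuple n x b` in the columns `2, …, n - 1`. -/
def middleValues (n x b : ℕ) : Finset ℕ := ((Icc 1 n).erase x).erase b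

theorem aTuple_last (n x b : ℕ) : aTuple n x b n = b := if_pos rfl

theorem mem_middleValues : i ∈ middleValues n x b ↔ i ≠ b ∧ i ≠ x ∧ i ∈ Set.Icc 1 n := by
  rw [middleValues, mem_erase, mem_erase, mem_Icc, Set.mem_Icc]

theorem card_middleValues (hx : x ∈ Set.Icc 1 n) (hb : b ∈ Set.Icc 1 n) (hne : x ≠ b) :
    #(middleValues n x b) = n - 2 := by
  rw [middleValues, card_erase_of_mem (mem_erase.mpr ⟨hne.symm, mem_Icc.mpr hb⟩),
    card_erase_of_mem (mem_Icc.mpr hx), Nat.card_Icc]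
  omega

theorem exists_aTuple_eq_getElem (hx : x ∈ Set.Icc 1 n) (hb : b ∈ Set.Icc 1 n) (hne : x ≠ b)
    (hi : i ∈ Set.Icc 2 n) (hin : i ≠ n) :
    ∃ hlt : n - 1 - i < ((middleValues n x b).sort (· ≤ ·)).length,
      aTuple n x b i = ((middleValues n x b).sort (· ≤ ·))[n - 1 - i] := by
  have hlt : n - 1 - i < ((middleValues n x b).sort (· ≤ ·)).length := by
    rw [length_sort, card_middleValues hx hb hne]
    have := hi.1
    have := hi.2
    omega
  exact ⟨hlt, (if_neg hin).trans (List.getD_eq_getElem _ _ hlt)⟩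

theorem aTuple_mem_middleValues (hx : x ∈ Set.Icc 1 n) (hb : b ∈ Set.Icc 1 n) (hne : x ≠ b)
    (hi : i ∈ Set.Icc 2 n) (hin : i ≠ n) : aTuple n x b i ∈ middleValues n x b := by
  obtain ⟨hlt, he⟩ := exists_aTuple_eq_getElem hx hb hne hi hin
  rw [he, ← mem_sort (· ≤ ·)]
  exact List.getElem_mem hlt

theorem isRow_aTuple (hx : x ∈ Set.Icc 1 n) (hb : b ∈ Set.Icc 1 n) (hne : x ≠ b) :
    IsRow n (aTuple n x b) x := by
  have hmem : ∀ {i}, i ∈ Set.Icc 2 n → i ≠ n → aTuple n x b i ∈ middleValues n x b :=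
    aTuple_mem_middleValues hx hb hne
  have hlast : ∀ {i}, i ∈ Set.Icc 2 n → aTuple n x b i = b → i = n := fun hi he =>
    by_contra fun hin => (mem_middleValues.mp (hmem hi hin)).1 he
  refine ⟨hx, fun i hi => ?_, fun i hi c hc he => ?_⟩
  · rcases eq_or_ne i n with rfl | hin
    · rw [aTuple_last]
      exact ⟨hb, hne.symm⟩
    · obtain ⟨-, hix, hmem⟩ := mem_middleValues.mp (hmem hi hin)
      exact ⟨hmem, hix⟩
  · rcases eq_or_ne i n with rfl | hin
    · exact (hlast hc (he.symm.trans (aTuple_last ..))).symm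
    · rcases eq_or_ne c n with rfl | hcn
      · exact hlast hi (he.trans (aTuple_last ..))
      · obtain ⟨hilt, hi'⟩ := exists_aTuple_eq_getElem hx hb hne hi hin
        obtain ⟨hclt, hc'⟩ := exists_aTuple_eq_getElem hx hb hne hc hcn
        rw [hi', hc', (sort_nodup _ _).getElem_inj_iff] at he
        have := hi.2
        have := hc.2
        omega

theorem IsRow.cCoef_eq_cBar (ha : IsRow n a h) (hn : 2 ≤ n) (hm : 1 ≤ m) :
    cCoef n (almostRect n m₁ m) a k = cBar n (almostRect n m₁ m) h (a n) k := by
  have hlast := ha.mapsTo ⟨hn, le_rfl⟩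
  exact cCoef_almostRect_congr hn hm ha (isRow_aTuple ha.hole_mem hlast.1 (Ne.symm hlast.2))
    (aTuple_last ..).symm

theorem cycFirst_one_Icc_sdiff (hn : 2 ≤ n) : cycFirst 1 (Set.Icc 1 n \ {1}) = 2 := by
  refine cycFirst_eq_of_le ⟨⟨one_le_two, hn⟩, by simp⟩ one_le_two fun x hx _ => ?_
  have hne : x ≠ 1 := hx.2
  have := hx.1.1
  omega

theorem IsRow.X_pow_stepAsc_mul_cCoef_nextRow_one (ha : IsRow n a h) (hlast : a n = 1)
    (hn : 2 ≤ n) (hm : 1 ≤ m) :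
    Polynomial.X ^ stepAsc n (almostRect n m₁ m) a (nextRow a h 1) *
      cCoef n (almostRect n m₁ m) (nextRow a h 1) k = cBar n (almostRect n m₁ m) 1 2 k := by
  have hone : 1 ∈ Set.Icc 1 n := ⟨le_rfl, by omega⟩
  have hcarry : carry a h 1 (n - 1) = 2 := by
    rw [ha.carry_sub_one hn, hlast, cycFirst_one_Icc_sdiff hn]
  have hnext : nextRow a h 1 n = 2 := by
    rw [ha.nextRow_last hone hn, hlast, if_pos rfl, cycFirst_one_Icc_sdiff hn]
  have hh : 2 ≤ h := by
    have hne : a n ≠ h := (ha.mapsTo ⟨hn, le_rfl⟩).2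
    have := ha.hole_mem.1
    omega
  rw [stepAsc_almostRect hn hm, hcarry, hnext, hlast, if_neg (by omega), if_neg (by omega),
    (ha.isRow_nextRow hone).cCoef_eq_cBar hn hm, hnext, pow_zero, one_mul]

theorem IsRow.X_pow_stepAsc_mul_cCoef_nextRow_of_ne_one (ha : IsRow n a h) (hlast : a n = 1)
    (hn : 2 ≤ n) (hm : 1 ≤ m) (hb : b ∈ Set.Icc 1 n) (hb1 : b ≠ 1) :
    Polynomial.X ^ stepAsc n (almostRect n m₁ m) a (nextRow a h b) *
      cCoef n (almostRect n m₁ m) (nextRow a h b) k =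
        Polynomial.X ^ (if h < b then m else 0) * cBar n (almostRect n m₁ m) b 1 k := by
  have hmem : b ∈ Set.Icc 1 n \ {1} := ⟨hb, hb1⟩
  have hcarry : carry a h b (n - 1) = b := by
    rw [ha.carry_sub_one hn, hlast, cycFirst_of_mem hmem]
  have hnext : nextRow a h b n = 1 := by
    rw [ha.nextRow_last hb hn, hlast, if_neg hb1.symm]
  rw [stepAsc_almostRect hn hm, hcarry, hnext, hlast, if_neg (lt_irrefl 1), add_zero,
    (ha.isRow_nextRow hb).cCoef_eq_cBar hn hm, hnext]

end Tuples

end CO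

open CO in
/-- The recurrence for `c^{λ⁺}_{j|1}` with
`λ = (0, m₂, …, m₂, m₁+m₂)` and `λ⁺ = (0, m₂+1, …, m₂+1, m₁+m₂+1)`:
`c^{λ⁺}_{j|1}(k₁+1,…,k_{j-1}+1,k_j,k_{j+1}+1,…,k_n+1)
  = Σ_{i=2}^{j} c^λ_{i|1}(k) + q^{m₂} Σ_{i=j+1}^{n} c^λ_{i|1}(k) + c^λ_{1|2}(k)`. -/
theorem cbar_recurrence (n : ℕ) (hn : 3 ≤ n) (m₁ m₂ : ℕ) (hm₂ : 1 ≤ m₂)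
    (lam lamP : ℕ → ℕ)
    (hlam : lam = fun i => if i = n then m₁ + m₂ else if 2 ≤ i then m₂ else 0)
    (hlamP : lamP = fun i => if i = n then m₁ + m₂ + 1 else if 2 ≤ i then m₂ + 1 else 0)
    (j : ℕ) (hj1 : 2 ≤ j) (hj2 : j ≤ n) (k : ℕ → ℕ) :
    cBar n lamP j 1 (fun i => if i = j then k i else k i + 1)
      = (∑ i ∈ Finset.Icc 2 j, cBar n lam i 1 k) +
          Polynomial.X ^ m₂ * (∑ i ∈ Finset.Icc (j + 1) n, cBar n lam i 1 k) +
          cBar n lam 1 2 k := by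
  have hn2 : 2 ≤ n := by omega
  have ha : IsRow n (aTuple n j 1) j :=
    isRow_aTuple ⟨by omega, hj2⟩ ⟨le_rfl, by omega⟩ (by omega)
  have hlast : aTuple n j 1 n = 1 := aTuple_last n j 1
  have hK : ∀ x ∈ Icc 1 n, (if x = j then k x else k x + 1) = k x + if x = j then 0 else 1 :=
    fun x _ => by split_ifs <;> rfl
  obtain rfl : lam = almostRect n m₁ m₂ := hlam
  obtain rfl : lamP = almostRect n m₁ (m₂ + 1) := hlamP
  calc
    _ = ∑ b ∈ Icc 1 n, Polynomial.X ^ stepAsc n (almostRect n m₁ m₂) (aTuple n j 1)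
          (nextRow (aTuple n j 1) j b) *
          cCoef n (almostRect n m₁ m₂) (nextRow (aTuple n j 1) j b) k :=
      cCoef_almostRect_succ hn2 hm₂ ha hK
    _ = cBar n (almostRect n m₁ m₂) 1 2 k + ∑ b ∈ Ioc 1 n,
          Polynomial.X ^ (if j < b then m₂ else 0) * cBar n (almostRect n m₁ m₂) b 1 k := by
      rw [← add_sum_Ioc_eq_sum_Icc (by omega),
        ha.X_pow_stepAsc_mul_cCoef_nextRow_one hlast hn2 hm₂]
      refine congrArg _ (sum_congr rfl fun b hb => ?_)
      obtain ⟨hb1, hbn⟩ := mem_Ioc.mp hb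
      exact ha.X_pow_stepAsc_mul_cCoef_nextRow_of_ne_one hlast hn2 hm₂ ⟨hb1.le, hbn⟩ hb1.ne'
    _ = _ := by
      rw [add_comm, sum_Ioc_pow_ite_mul (by omega) hj2, Icc_add_one_left_eq_Ioc]
      rfl
end
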